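/- arXiv:2604.24412 — 10 statements merged into one kernel-verified Lean document; each statement's English description precedes it below -/
import Mathlib

section
/- For every integer h ≥ 4, there exists a (2h−1)-uniform hypergraph H which has no polychromatic 3-coloring, but all of whose h-heavy restricted subhypergraphs are 2-colorable. -/
/-- Every edge of the hypergraph has exactly `m` vertices. -/
def IsUniform {α : Type*} (E : Finset (Finset α)) (m : ℕ) : Prop :=
  ∀ e ∈ E, e.card = m

/-- There is no coloring of the vertices with 3 colors such that every
edge contains all 3 colors. -/
def NoPolychromatic3 {α : Type*} (E : Finset (Finset α)) : Prop :=
  ∀ c : α → Fin 3, ∃ e ∈ E, ∃ i : Fin 3, ∀ v ∈ e, c v ≠ i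

/-- Every `h`-heavy restricted subhypergraph (a family of trace edges on some
`X`, all of size at least `h`) admits a proper two-coloring. -/
def HeavyRestrictedTwoColorable {α : Type*} [DecidableEq α]
    (E : Finset (Finset α)) (h : ℕ) : Prop :=
  ∀ X : Finset α, ∀ F : Finset (Finset α),
    (∀ f ∈ F, (∃ e ∈ E, f = e ∩ X) ∧ h ≤ f.card) →
    ∃ c : α → Bool, ∀ f ∈ F, (∃ v ∈ f, c v = true) ∧ (∃ v ∈ f, c v = false)


/-!
Take `3 * h - 1` points and let the edges be the complements of a family `𝒦` of `h`-sets. A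
3-coloring has a class of fewer than `h` points, so none is polychromatic once every set of fewer
than `h` points lies in a member of `𝒦`. The trace of the edge `Sᶜ` on `X` is `X \ S`, so splitting
`X` into `A` and `X \ A` fails only if one of the two parts lies in a member of `𝒦`. For
`#X ≤ 2 * h - 2` any balanced split works, as the traces have size at least `h`. For `#X ≥ 2 * h` it
suffices to split `2 * h` of the points into two `h`-sets outside `𝒦`, and for `#X = 2 * h - 1` to
find an `(h - 1)`-set in `X` which no point outside `X` extends to a member of `𝒦`.

The points are `2 * h` points `U`, halved into `T` and `Tᶜ`, and `h - 1` points `W`. Membership of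
`A ∪ Z` in `𝒦` depends essentially on the parity of `#Z`; the exceptions are `Z = ∅`, where only `T`
and `Tᶜ` are taken, and singletons, where `Z = {f A}` for the `(h - 1)`-sets `A` meeting both
halves. The function `f` is read off from `A ∩ T` so that every set of `2 * h - 1` points containing
neither half contains some `A ∪ {f A}`.
-/

section

open Finset
open scoped FinsetFamily

section Reduction

variable {α β : Type*}

lemma IsUniform.map_equiv {E : Finset (Finset α)} {m : ℕ} (hE : IsUniform E m) (φ : α ≃ β) :
    IsUniform (E.map φ.finsetCongr.toEmbedding) m := by
  intro f hf
  obtain ⟨e, he, rfl⟩ := mem_map.1 hf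
  simpa using hE e he

lemma NoPolychromatic3.map_equiv {E : Finset (Finset α)} (hE : NoPolychromatic3 E) (φ : α ≃ β) :
    NoPolychromatic3 (E.map φ.finsetCongr.toEmbedding) := by
  intro c
  obtain ⟨e, he, i, hi⟩ := hE (c ∘ φ)
  exact ⟨φ.finsetCongr e, mem_map_of_mem _ he, i, by simpa [-mem_map_equiv] using hi⟩

lemma HeavyRestrictedTwoColorable.map_equiv [DecidableEq α] [DecidableEq β]
    {E : Finset (Finset α)} {h : ℕ} (hE : HeavyRestrictedTwoColorable E h) (φ : α ≃ β) :
    HeavyRestrictedTwoColorable (E.map φ.finsetCongr.toEmbedding) h := by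
  intro X F hF
  obtain ⟨c, hc⟩ := hE (φ.symm.finsetCongr X) (F.map φ.symm.finsetCongr.toEmbedding) (by
    simp only [mem_map_equiv, Equiv.finsetCongr_symm, Equiv.symm_symm]
    intro f hf
    obtain ⟨⟨e, he, hfe⟩, hcard⟩ := hF _ hf
    refine ⟨⟨φ.symm.finsetCongr e, by simpa [mem_map_equiv] using he, ?_⟩, by simpa using hcard⟩
    apply φ.finsetCongr.injective
    simpa [map_inter, map_map] using hfe)
  refine ⟨c ∘ φ.symm, fun f hf => ?_⟩
  simpa [-mem_map_equiv] using hc (φ.symm.finsetCongr f) (mem_map_of_mem _ hf)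

variable [DecidableEq α] {𝒦 : Finset (Finset α)} {h : ℕ}

lemma exists_split_of_card_add_one_lt {X : Finset α} (hX : #X + 1 < 2 * h) :
    ∃ A ⊆ X, ∀ S : Finset α, h ≤ #(X \ S) → ¬ A ⊆ S ∧ ¬ X \ A ⊆ S := by
  obtain ⟨A, hAX, hA⟩ := exists_subset_card_eq (s := X) (n := #X / 2) (by omega)
  have hXA := card_sdiff_of_subset hAX
  refine ⟨A, hAX, fun S hS => ⟨fun hAS => ?_, fun hAS => ?_⟩⟩
  · have := card_le_card (sdiff_subset_sdiff (subset_refl X) hAS)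
    omega
  · have := card_le_card (sdiff_subset_sdiff (subset_refl X) hAS)
    rw [Finset.sdiff_sdiff_eq_self hAX] at this
    omega

lemma exists_split_of_forall_insert_notMem (h𝒦 : (𝒦 : Set (Finset α)).Sized h) {X B : Finset α}
    (hX : #X + 1 = 2 * h) (hBX : B ⊆ X) (hB : #B + 1 = h) (hins : ∀ v ∉ X, insert v B ∉ 𝒦) :
    ∃ A ⊆ X, ∀ S ∈ 𝒦, h ≤ #(X \ S) → ¬ A ⊆ S ∧ ¬ X \ A ⊆ S := by
  have hXB : #(X \ B) = h := by rw [card_sdiff_of_subset hBX]; omega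
  refine ⟨B, hBX, fun S hS hheavy => ⟨fun hBS => ?_, fun hXBS => ?_⟩⟩
  · obtain ⟨v, hvB, rfl⟩ : ∃ v ∉ B, insert v B = S :=
      exists_eq_insert_iff.2 ⟨hBS, by rw [h𝒦 hS, hB]⟩
    have hvX : v ∈ X := by_contra fun hvX => hins v hvX hS
    have : #(X \ insert v B) < #(X \ B) :=
      card_lt_card <| ssubset_iff_of_subset (sdiff_subset_sdiff subset_rfl hBS) |>.2
        ⟨v, by simp [hvX, hvB]⟩
    omega
  · have hS_eq : X \ B = S := eq_of_subset_of_card_le hXBS (by rw [h𝒦 hS, hXB])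
    rw [← hS_eq, Finset.sdiff_sdiff_eq_self hBX] at hheavy
    omega

lemma exists_split_of_notMem (h𝒦 : (𝒦 : Set (Finset α)).Sized h) {X Y A : Finset α} (hYX : Y ⊆ X)
    (hY : #Y = 2 * h) (hAY : A ⊆ Y) (hA : #A = h) (hA𝒦 : A ∉ 𝒦) (hYA𝒦 : Y \ A ∉ 𝒦) :
    ∃ A ⊆ X, ∀ S ∈ 𝒦, ¬ A ⊆ S ∧ ¬ X \ A ⊆ S := by
  have not_subset_of_notMem {B S : Finset α} (hB : #B = h) (hB𝒦 : B ∉ 𝒦) (hS : S ∈ 𝒦) : ¬ B ⊆ S :=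
    fun hBS => hB𝒦 (eq_of_subset_of_card_le hBS (by rw [h𝒦 hS, hB]) ▸ hS)
  have hYA : #(Y \ A) = h := by rw [card_sdiff_of_subset hAY]; omega
  exact ⟨A, hAY.trans hYX, fun S hS => ⟨not_subset_of_notMem hA hA𝒦 hS, fun hXAS =>
    not_subset_of_notMem hYA hYA𝒦 hS ((sdiff_subset_sdiff hYX subset_rfl).trans hXAS)⟩⟩

variable [Fintype α]

lemma isUniform_compls (h𝒦 : (𝒦 : Set (Finset α)).Sized h) :
    IsUniform 𝒦ᶜˢ (Fintype.card α - h) :=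
  fun _ he => h𝒦.compls he

/-- In a 3-coloring of fewer than `3 * h` points some color class has fewer than `h` points; an
edge whose complement contains that class misses the color. -/
lemma noPolychromatic3_compls (hα : Fintype.card α < 3 * h)
    (hcover : ∀ B : Finset α, #B < h → ∃ S ∈ 𝒦, B ⊆ S) : NoPolychromatic3 𝒦ᶜˢ := by
  intro c
  obtain ⟨i, hi⟩ := Fintype.exists_card_fiber_lt_of_card_lt_mul c (by simpa using hα)
  obtain ⟨S, hS, hsub⟩ := hcover _ hi
  refine ⟨Sᶜ, by simpa using hS, i, fun v hv hvi => mem_compl.1 hv (hsub ?_)⟩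
  simpa using hvi

lemma heavyRestrictedTwoColorable_compls_of_forall_exists_split
    (hsplit : ∀ X : Finset α, ∃ A ⊆ X, ∀ S ∈ 𝒦, h ≤ #(X \ S) → ¬ A ⊆ S ∧ ¬ X \ A ⊆ S) :
    HeavyRestrictedTwoColorable 𝒦ᶜˢ h := by
  intro X F hF
  obtain ⟨A, hAX, hA⟩ := hsplit X
  refine ⟨fun v => decide (v ∈ A), fun f hf => ?_⟩
  obtain ⟨⟨e, he, rfl⟩, hcard⟩ := hF f hf
  have htrace : e ∩ X = X \ eᶜ := by rw [sdiff_compl, inf_eq_inter, inter_comm]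
  rw [htrace] at hcard ⊢
  obtain ⟨hA₁, hA₂⟩ := hA _ (mem_compls.1 he) hcard
  obtain ⟨a, haA, ha⟩ := not_subset.1 hA₁
  obtain ⟨b, hbX, hb⟩ := not_subset.1 hA₂
  rw [mem_sdiff] at hbX
  exact ⟨⟨a, mem_sdiff.2 ⟨hAX haA, ha⟩, by simpa using haA⟩,
    ⟨b, mem_sdiff.2 ⟨hbX.1, hb⟩, by simpa using hbX.2⟩⟩

theorem heavyRestrictedTwoColorable_compls (h𝒦 : (𝒦 : Set (Finset α)).Sized h)
    (hodd : ∀ X : Finset α, #X + 1 = 2 * h → ∃ B ⊆ X, #B + 1 = h ∧ ∀ v ∉ X, insert v B ∉ 𝒦)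
    (heven : ∀ X : Finset α, #X = 2 * h → ∃ A ⊆ X, #A = h ∧ A ∉ 𝒦 ∧ X \ A ∉ 𝒦) :
    HeavyRestrictedTwoColorable 𝒦ᶜˢ h := by
  refine heavyRestrictedTwoColorable_compls_of_forall_exists_split fun X => ?_
  rcases lt_trichotomy (#X + 1) (2 * h) with hX | hX | hX
  · obtain ⟨A, hAX, hA⟩ := exists_split_of_card_add_one_lt hX
    exact ⟨A, hAX, fun S _ => hA S⟩
  · obtain ⟨B, hBX, hB, hins⟩ := hodd X hX
    exact exists_split_of_forall_insert_notMem h𝒦 hX hBX hB hins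
  · obtain ⟨Y, hYX, hY⟩ := exists_subset_card_eq (s := X) (n := 2 * h) (by omega)
    obtain ⟨A, hAY, hA, hA𝒦, hYA𝒦⟩ := heven Y hY
    obtain ⟨A', hA'X, hA'⟩ := exists_split_of_notMem h𝒦 hYX hY hAY hA hA𝒦 hYA𝒦
    exact ⟨A', hA'X, fun S hS _ => hA' S hS⟩

end Reduction

section Construction

variable {U : Type*} [Fintype U] [DecidableEq U] {T A B Y : Finset U} {h : ℕ}

/-- `A` meets both parts of the bipartition of the ground set into `T` and `Tᶜ`. -/
def IsMixed (T A : Finset U) : Prop :=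
  ¬ A ⊆ T ∧ ¬ A ⊆ Tᶜ

lemma isMixed_compl : IsMixed Tᶜ A ↔ IsMixed T A := by
  rw [IsMixed, IsMixed, compl_compl, and_comm]

lemma not_isMixed_iff : ¬ IsMixed T A ↔ A ⊆ T ∨ A ⊆ Tᶜ := by
  rw [IsMixed]; tauto

lemma IsMixed.mono (hA : IsMixed T A) (hAB : A ⊆ B) : IsMixed T B :=
  ⟨fun hB => hA.1 (hAB.trans hB), fun hB => hA.2 (hAB.trans hB)⟩

lemma IsMixed.ne (hA : IsMixed T A) : A ≠ T :=
  fun hAT => hA.1 hAT.subset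

lemma IsMixed.ne_compl (hA : IsMixed T A) : A ≠ Tᶜ :=
  fun hAT => hA.2 hAT.subset

lemma exists_isMixed_subset (hh : 3 ≤ h) (hT : #T = h) (hTc : #Tᶜ = h) (hY : h < #Y) (u : U) :
    ∃ A ⊆ Y, #A = h ∧ IsMixed T A ∧ (u ∈ Y → u ∈ A) := by
  obtain ⟨a, haY, haT⟩ := exists_mem_notMem_of_card_lt_card (hT ▸ hY)
  obtain ⟨b, hbY, hbT⟩ := exists_mem_notMem_of_card_lt_card (hTc ▸ hY)
  have hcard : #({a, b, u} ∩ Y) ≤ h :=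
    (card_le_card inter_subset_left).trans (card_le_three.trans hh)
  obtain ⟨A, habuA, hAY, hA⟩ := exists_subsuperset_card_eq inter_subset_right hcard hY.le
  refine ⟨A, hAY, hA, ⟨fun hAT => haT (hAT (habuA ?_)), fun hAT => hbT (hAT (habuA ?_))⟩,
    fun hu => habuA ?_⟩ <;> simp [*]

lemma exists_not_isMixed_subset (hh : 2 ≤ h) (hT : #T = h) (hTc : #Tᶜ = h) (hY : 2 * h ≤ #Y + 2)
    (hY' : #Y < 2 * h) :
    ∃ B ⊆ Y, #B + 1 = h ∧ ¬ IsMixed T B ∧ Y \ B ≠ T ∧ Y \ B ≠ Tᶜ := by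
  wlog hle : #(Y ∩ Tᶜ) ≤ #(Y ∩ T) generalizing T
  · obtain ⟨B, hBY, hB, hBmixed, hBT, hBTc⟩ :=
      this (T := Tᶜ) hTc (by rwa [compl_compl]) (by rw [compl_compl]; omega)
    exact ⟨B, hBY, hB, mt isMixed_compl.2 hBmixed, by rwa [compl_compl] at hBTc, hBT⟩
  have hsum : #(Y ∩ T) + #(Y ∩ Tᶜ) = #Y := by
    rw [← sdiff_eq_inter_compl, card_inter_add_card_sdiff]
  obtain ⟨B, hBYT, hB⟩ := exists_subset_card_eq (s := Y ∩ T) (n := h - 1) (by omega)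
  obtain ⟨hBY, hBT⟩ := subset_inter_iff.1 hBYT
  obtain ⟨b, hb⟩ : B.Nonempty := card_pos.1 (by omega)
  refine ⟨B, hBY, by omega, fun hBmixed => hBmixed.1 hBT, fun hYB => ?_, fun hYB => ?_⟩
  · have hbYB : b ∈ Y \ B := hYB ▸ hBT hb
    exact (mem_sdiff.1 hbYB).2 hb
  · have hTcY : Tᶜ ⊆ Y ∩ Tᶜ := subset_inter (hYB ▸ sdiff_subset) subset_rfl
    have := card_le_card hTcY
    omega

variable {W : Type*} [Fintype W] {f : Finset U → W} {u₀ : U} {Z : Finset W}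

/-- The sets `A ∪ Z` with `A ⊆ U` and `Z ⊆ W` which, when they have size `h`, are the complements of
the edges of the constructed hypergraph. The clause with `u₀` is what covers the set `W` itself when
`#W = h - 1` is odd. -/
def IsCoEdge (T : Finset U) (f : Finset U → W) (u₀ : U) (A : Finset U) (Z : Finset W) : Prop :=
  (Z = ∅ ∧ (A = T ∨ A = Tᶜ)) ∨
  (Z = {f A} ∧ IsMixed T A) ∨
  (2 ≤ #Z ∧ (Even #Z ∨ A = {u₀} ∧ Z = univ))

lemma isCoEdge_empty : IsCoEdge T f u₀ A ∅ ↔ A = T ∨ A = Tᶜ := by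
  simp [IsCoEdge, eq_comm (a := ∅)]

lemma isCoEdge_singleton {w : W} : IsCoEdge T f u₀ A {w} ↔ w = f A ∧ IsMixed T A := by
  simp [IsCoEdge]

lemma isCoEdge_of_odd (hZ : Odd #Z) (hZ₁ : 1 < #Z) :
    IsCoEdge T f u₀ A Z ↔ A = {u₀} ∧ Z = univ := by
  have hempty : Z ≠ ∅ := by rintro rfl; simp at hZ₁
  have hsingleton : Z ≠ {f A} := by rintro rfl; simp at hZ₁
  simp [IsCoEdge, hempty, hsingleton, Nat.not_even_iff_odd.2 hZ, show 2 ≤ #Z from hZ₁]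

lemma isCoEdge_of_even (hZ : Even #Z) (hZ₁ : Z.Nonempty) : IsCoEdge T f u₀ A Z := by
  obtain ⟨r, hr⟩ := hZ
  have := hZ₁.card_pos
  exact Or.inr (Or.inr ⟨by omega, Or.inl ⟨r, hr⟩⟩)

open scoped Classical in
/-- The family of complements of the edges of the constructed hypergraph on `U ⊕ W`. -/
noncomputable def coEdges (h : ℕ) (T : Finset U) (f : Finset U → W) (u₀ : U) :
    Finset (Finset (U ⊕ W)) :=
  {S | #S = h ∧ IsCoEdge T f u₀ S.toLeft S.toRight}

lemma mem_coEdges {S : Finset (U ⊕ W)} :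
    S ∈ coEdges h T f u₀ ↔ #S = h ∧ IsCoEdge T f u₀ S.toLeft S.toRight := by
  simp [coEdges]

lemma sized_coEdges : (coEdges h T f u₀ : Set (Finset (U ⊕ W))).Sized h :=
  fun _ hS => (mem_coEdges.1 hS).1

lemma exists_isCoEdge_insert [DecidableEq W] (hh : 3 ≤ h) (hT : #T = h) (hTc : #Tᶜ = h)
    (hW : Fintype.card W + 1 = h) (hAZ : #A + #Z + 1 = h) :
    (∃ u ∉ A, IsCoEdge T f u₀ (insert u A) Z) ∨ ∃ w ∉ Z, IsCoEdge T f u₀ A (insert w Z) := by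
  rcases Z.eq_empty_or_nonempty with rfl | hZ
  · rw [card_empty] at hAZ
    by_cases hA : IsMixed T A
    · exact Or.inr ⟨f A, notMem_empty _, isCoEdge_singleton.2 ⟨rfl, hA⟩⟩
    · refine Or.inl ?_
      simp only [isCoEdge_empty]
      rcases not_isMixed_iff.1 hA with hAT | hAT
      · obtain ⟨u, hu, huA⟩ := exists_eq_insert_iff.2 ⟨hAT, by omega⟩
        exact ⟨u, hu, Or.inl huA⟩
      · obtain ⟨u, hu, huA⟩ := exists_eq_insert_iff.2 ⟨hAT, by omega⟩
        exact ⟨u, hu, Or.inr huA⟩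
  rcases Nat.even_or_odd #Z with hZeven | hZodd
  · obtain ⟨u, -, hu⟩ := exists_mem_notMem_of_card_lt_card (show #A < #T by omega)
    exact Or.inl ⟨u, hu, isCoEdge_of_even hZeven hZ⟩
  by_cases hZuniv : Z = univ
  · have hZcard : #Z = Fintype.card W := by rw [hZuniv, card_univ]
    obtain rfl : A = ∅ := card_eq_zero.1 (by omega)
    exact Or.inl ⟨u₀, notMem_empty _, (isCoEdge_of_odd hZodd (by omega)).2 ⟨rfl, hZuniv⟩⟩
  · obtain ⟨w, hw⟩ : ∃ w, w ∉ Z := by simpa [eq_univ_iff_forall] using hZuniv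
    exact Or.inr ⟨w, hw, isCoEdge_of_even (card_insert_of_notMem hw ▸ hZodd.add_one)
      (insert_nonempty w Z)⟩

lemma exists_coEdge_superset (hh : 3 ≤ h) (hT : #T = h) (hTc : #Tᶜ = h)
    (hW : Fintype.card W + 1 = h) {B : Finset (U ⊕ W)} (hB : #B < h) :
    ∃ S ∈ coEdges h T f u₀, B ⊆ S := by
  classical
  have hUcard : #T + #Tᶜ = Fintype.card U := card_add_card_compl T
  obtain ⟨C, hBC, hC⟩ := exists_superset_card_eq (s := B) (n := h - 1) (by omega)
    (by rw [Fintype.card_sum]; omega)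
  have hCsplit : #C.toLeft + #C.toRight = #C := card_toLeft_add_card_toRight
  rcases exists_isCoEdge_insert (f := f) (u₀ := u₀) hh hT hTc hW
    (A := C.toLeft) (Z := C.toRight) (by omega) with ⟨u, hu, hcoEdge⟩ | ⟨w, hw, hcoEdge⟩
  · refine ⟨insert (.inl u) C, mem_coEdges.2 ⟨?_, by simpa⟩, hBC.trans (subset_insert _ _)⟩
    rw [card_insert_of_notMem (by simpa using hu)]; omega
  · refine ⟨insert (.inr w) C, mem_coEdges.2 ⟨?_, by simpa⟩, hBC.trans (subset_insert _ _)⟩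
    rw [card_insert_of_notMem (by simpa using hw)]; omega

lemma exists_subset_not_isCoEdge_of_even [DecidableEq W] (hh : 2 ≤ h) (hT : #T = h) (hTc : #Tᶜ = h)
    (hW : Fintype.card W < h) (hYZ : #Y + #Z = 2 * h) (hZ : Even #Z) (hZne : Z.Nonempty) :
    ∃ A ⊆ Y, ∃ Z' ⊆ Z, #A + #Z' = h ∧
      ¬ IsCoEdge T f u₀ A Z' ∧ ¬ IsCoEdge T f u₀ (Y \ A) (Z \ Z') := by
  have hZpos : 0 < #Z := hZne.card_pos
  have hZW : #Z ≤ Fintype.card W := card_le_univ Z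
  obtain ⟨A, hAY, hA, hYA⟩ : ∃ A ⊆ Y, #A + 1 = h ∧ (#Z = 2 → ¬ IsMixed T (Y \ A)) := by
    by_cases hZ₂ : #Z = 2
    · obtain ⟨B, hBY, hB, hBmixed, -⟩ :=
        exists_not_isMixed_subset (Y := Y) hh hT hTc (by omega) (by omega)
      refine ⟨Y \ B, sdiff_subset, by rw [card_sdiff_of_subset hBY]; omega, fun _ => ?_⟩
      rwa [Finset.sdiff_sdiff_eq_self hBY]
    · obtain ⟨A, hAY, hA⟩ := exists_subset_card_eq (s := Y) (n := h - 1) (by omega)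
      exact ⟨A, hAY, by omega, fun hZ₂' => absurd hZ₂' hZ₂⟩
  obtain ⟨w, hwZ, hw⟩ := exists_mem_ne (show 1 < #Z by grind) (f A)
  have hZw : #(Z \ {w}) + 1 = #Z := by rw [sdiff_singleton_eq_erase, card_erase_add_one hwZ]
  refine ⟨A, hAY, {w}, singleton_subset_iff.2 hwZ, by simpa using hA,
    fun hAw => hw (isCoEdge_singleton.1 hAw).1, ?_⟩
  by_cases hZ₂ : #Z = 2
  · obtain ⟨w', hw'⟩ := card_eq_one.1 (show #(Z \ {w}) = 1 by omega)
    rw [hw', isCoEdge_singleton]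
    exact fun hYA' => hYA hZ₂ hYA'.2
  · have hodd : Odd #(Z \ {w}) := by grind
    rw [isCoEdge_of_odd hodd (by grind)]
    rintro ⟨-, huniv⟩
    simpa using huniv.symm.subset (mem_univ w)

lemma exists_subset_not_isCoEdge_of_empty (hh : 3 ≤ h) (hT : #T = h) (hTc : #Tᶜ = h)
    (hY : #Y = 2 * h) :
    ∃ A ⊆ Y, #A = h ∧ ¬ IsCoEdge T f u₀ A ∅ ∧ ¬ IsCoEdge T f u₀ (Y \ A) ∅ := by
  obtain rfl : Y = univ := eq_univ_of_card Y (by rw [← card_add_card_compl T]; omega)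
  obtain ⟨A, hAY, hA, hAmixed, -⟩ := exists_isMixed_subset hh hT hTc (by omega : h < #univ) u₀
  refine ⟨A, hAY, hA, ?_, ?_⟩ <;> rw [isCoEdge_empty, not_or]
  · exact ⟨hAmixed.ne, hAmixed.ne_compl⟩
  · rw [← compl_eq_univ_sdiff, compl_inj_iff, compl_eq_comm]
    exact ⟨hAmixed.ne_compl.symm, hAmixed.ne⟩

lemma exists_subset_not_isCoEdge_of_odd (hh : 3 ≤ h) (hT : #T = h) (hTc : #Tᶜ = h)
    (hW : Fintype.card W < h) (hYZ : #Y + #Z = 2 * h) (hZ : Odd #Z) :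
    ∃ A ⊆ Y, #A = h ∧ ¬ IsCoEdge T f u₀ A ∅ ∧ ¬ IsCoEdge T f u₀ (Y \ A) Z := by
  have hZpos : 0 < #Z := hZ.pos
  have hZW : #Z ≤ Fintype.card W := card_le_univ Z
  by_cases hZ₁ : #Z = 1
  · obtain ⟨B, hBY, hB, hBmixed, hBT, hBTc⟩ :=
      exists_not_isMixed_subset (Y := Y) (by omega) hT hTc (by omega) (by omega)
    obtain ⟨w, rfl⟩ := card_eq_one.1 hZ₁
    refine ⟨Y \ B, sdiff_subset, by rw [card_sdiff_of_subset hBY]; omega, ?_, ?_⟩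
    · rw [isCoEdge_empty]; exact not_or.2 ⟨hBT, hBTc⟩
    · rw [Finset.sdiff_sdiff_eq_self hBY, isCoEdge_singleton]
      exact fun hBw => hBmixed hBw.2
  · obtain ⟨A, hAY, hA, hAmixed, hu₀⟩ := exists_isMixed_subset (Y := Y) hh hT hTc (by omega) u₀
    refine ⟨A, hAY, hA, ?_, ?_⟩
    · rw [isCoEdge_empty]; exact not_or.2 ⟨hAmixed.ne, hAmixed.ne_compl⟩
    · rw [isCoEdge_of_odd hZ (by omega)]
      rintro ⟨hYA, -⟩
      obtain ⟨hu₀Y, hu₀A⟩ := mem_sdiff.1 (hYA ▸ mem_singleton_self u₀ : u₀ ∈ Y \ A)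
      exact hu₀A (hu₀ hu₀Y)

lemma exists_subset_notMem_coEdges [DecidableEq W] (hh : 3 ≤ h) (hT : #T = h) (hTc : #Tᶜ = h)
    (hW : Fintype.card W < h) {X : Finset (U ⊕ W)} (hX : #X = 2 * h) :
    ∃ A ⊆ X, #A = h ∧ A ∉ coEdges h T f u₀ ∧ X \ A ∉ coEdges h T f u₀ := by
  have hXsplit : #X.toLeft + #X.toRight = 2 * h := card_toLeft_add_card_toRight.trans hX
  obtain ⟨A, hA, Z, hZ, hcard, hAZ, hXAZ⟩ : ∃ A ⊆ X.toLeft, ∃ Z ⊆ X.toRight, #A + #Z = h ∧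
      ¬ IsCoEdge T f u₀ A Z ∧ ¬ IsCoEdge T f u₀ (X.toLeft \ A) (X.toRight \ Z) := by
    rcases Nat.even_or_odd #X.toRight with heven | hodd
    · rcases X.toRight.eq_empty_or_nonempty with hempty | hne
      · rw [hempty, card_empty, add_zero] at hXsplit
        obtain ⟨A, hA, hcard, hAZ⟩ := exists_subset_not_isCoEdge_of_empty (f := f) (u₀ := u₀)
          hh hT hTc hXsplit
        exact ⟨A, hA, ∅, empty_subset _, by simpa using hcard, by simpa [hempty] using hAZ⟩
      · exact exists_subset_not_isCoEdge_of_even (by omega) hT hTc hW hXsplit heven hne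
    · obtain ⟨A, hA, hcard, hAZ⟩ := exists_subset_not_isCoEdge_of_odd hh hT hTc hW hXsplit hodd
      exact ⟨A, hA, ∅, empty_subset _, by simpa using hcard, by simpa using hAZ⟩
  refine ⟨A.disjSum Z, disjSum_subset.2 ⟨hA, hZ⟩, by simpa using hcard, ?_, ?_⟩
  · exact fun hmem => hAZ (by simpa using (mem_coEdges.1 hmem).2)
  · exact fun hmem => hXAZ (by simpa [toLeft_sdiff, toRight_sdiff] using (mem_coEdges.1 hmem).2)

lemma exists_subset_forall_insert_ne (hh : 2 ≤ h) (hT : #T = h) (hTY : T ⊆ Y) :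
    ∃ B ⊆ Y, #B + 1 = h ∧ ¬ IsMixed T B ∧ ∀ u ∉ Y, insert u B ≠ T ∧ insert u B ≠ Tᶜ := by
  obtain ⟨B, hBT, hB⟩ := exists_subset_card_eq (s := T) (n := h - 1) (by omega)
  obtain ⟨b, hb⟩ : B.Nonempty := card_pos.1 (by omega)
  refine ⟨B, hBT.trans hTY, by omega, fun hBmixed => hBmixed.1 hBT, fun u hu => ⟨?_, ?_⟩⟩
  · exact fun huB => hu (hTY (huB ▸ mem_insert_self u B))
  · intro huB
    have hbT : b ∈ Tᶜ := huB ▸ mem_insert_of_mem hb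
    exact mem_compl.1 hbT (hBT hb)

/-- Every set `Y ∪ Z` of `2 * h - 1` points with `Y ⊆ U`, `Z ⊆ W` and `Y` containing neither `T` nor
`Tᶜ` contains some `B ∪ {f B}` with `B` mixed of size `h - 1`. This is the condition on `f` under
which the traces on such sets are two-colorable: only `f B` extends `B` to a co-edge. -/
def IsSpreading (h : ℕ) (T : Finset U) (f : Finset U → W) : Prop :=
  ∀ (Y : Finset U) (Z : Finset W), #Y + #Z + 1 = 2 * h → ¬ T ⊆ Y → ¬ Tᶜ ⊆ Y →
    ∃ B ⊆ Y, #B + 1 = h ∧ IsMixed T B ∧ f B ∈ Z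

lemma exists_subset_insert_not_isCoEdge (hh : 2 ≤ h) (hT : #T = h) (hTc : #Tᶜ = h)
    (hf : IsSpreading h T f) (hYZ : #Y + #Z + 1 = 2 * h) :
    ∃ B ⊆ Y, #B + 1 = h ∧ (∀ u ∉ Y, ¬ IsCoEdge T f u₀ (insert u B) ∅) ∧
      ∀ w ∉ Z, ¬ IsCoEdge T f u₀ B {w} := by
  simp only [isCoEdge_empty, isCoEdge_singleton, not_or]
  by_cases hTY : T ⊆ Y
  · obtain ⟨B, hBY, hB, hBmixed, hins⟩ := exists_subset_forall_insert_ne hh hT hTY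
    exact ⟨B, hBY, hB, hins, fun w _ hw => hBmixed hw.2⟩
  by_cases hTcY : Tᶜ ⊆ Y
  · obtain ⟨B, hBY, hB, hBmixed, hins⟩ := exists_subset_forall_insert_ne hh hTc hTcY
    simp only [compl_compl, isMixed_compl] at hins hBmixed
    exact ⟨B, hBY, hB, fun u hu => (hins u hu).symm, fun w _ hw => hBmixed hw.2⟩
  obtain ⟨B, hBY, hB, hBmixed, hfB⟩ := hf Y Z hYZ hTY hTcY
  refine ⟨B, hBY, hB, fun u _ => ?_, fun w hw hwf => hw (hwf.1 ▸ hfB)⟩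
  have hinsert : IsMixed T (insert u B) := hBmixed.mono (subset_insert u B)
  exact ⟨hinsert.ne, hinsert.ne_compl⟩

lemma exists_subset_insert_notMem_coEdges [DecidableEq W] (hh : 2 ≤ h) (hT : #T = h) (hTc : #Tᶜ = h)
    (hf : IsSpreading h T f) {X : Finset (U ⊕ W)} (hX : #X + 1 = 2 * h) :
    ∃ B ⊆ X, #B + 1 = h ∧ ∀ v ∉ X, insert v B ∉ coEdges h T f u₀ := by
  have hXsplit : #X.toLeft + #X.toRight = #X := card_toLeft_add_card_toRight
  obtain ⟨B, hBX, hB, hinl, hinr⟩ := exists_subset_insert_not_isCoEdge (u₀ := u₀) hh hT hTc hf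
    (show #X.toLeft + #X.toRight + 1 = 2 * h by omega)
  refine ⟨B.disjSum ∅, disjSum_subset.2 ⟨hBX, empty_subset _⟩, by simpa using hB, ?_⟩
  rintro (u | w) hv hmem <;> have hcoEdge := (mem_coEdges.1 hmem).2
  · exact hinl u (by simpa using hv) (by simpa [-disjSum_empty] using hcoEdge)
  · exact hinr w (by simpa using hv) (by simpa [-disjSum_empty] using hcoEdge)

end Construction

section Spreading

variable {U : Type*} [DecidableEq U] {T T₀ P β : Finset U} {n : ℕ}

lemma exists_isMixed_inter_eq [Fintype U] {Y : Finset U} (hβ : β ⊆ Y ∩ T) (hβpos : 0 < #β)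
    (hβn : #β < n) (hY : n ≤ #β + #(Y \ T)) : ∃ B ⊆ Y, #B = n ∧ B ∩ T = β ∧ IsMixed T B := by
  obtain ⟨hβY, hβT⟩ := subset_inter_iff.1 hβ
  obtain ⟨C, hC, hCcard⟩ := exists_subset_card_eq (s := Y \ T) (n := n - #β) (by omega)
  obtain ⟨hCY, hCT⟩ := subset_sdiff.1 hC
  obtain ⟨b, hb⟩ := card_pos.1 hβpos
  obtain ⟨c, hc⟩ : C.Nonempty := card_pos.1 (by omega)
  refine ⟨β ∪ C, union_subset hβY hCY, ?_, ?_, fun hT => ?_, fun hT => ?_⟩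
  · rw [card_union_of_disjoint (hCT.symm.mono_left hβT)]; omega
  · rw [union_inter_distrib_right, inter_eq_left.2 hβT, disjoint_iff_inter_eq_empty.1 hCT,
      union_empty]
  · exact disjoint_left.1 hCT hc (hT (mem_union_right β hc))
  · exact mem_compl.1 (hT (mem_union_left C hb)) (hβT hb)

variable [NeZero n]

/-- A label for a nonempty set `β` of fewer than `n` elements: its size, or `0` if it is a singleton
inside `T₀`. The sizes alone take only `n - 1` values; singling out the singletons inside `T₀` makes
all `n` labels occur. -/
def sizeLabel (n : ℕ) [NeZero n] (T₀ β : Finset U) : Fin n :=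
  if #β = 1 ∧ β ⊆ T₀ then 0 else Fin.ofNat n #β

lemma card_eq_max_sizeLabel_one (hβ : 0 < #β) (hβn : #β < n) :
    #β = max (sizeLabel n T₀ β : ℕ) 1 := by
  rw [sizeLabel]
  split_ifs with h
  · simpa using h.1
  · simp [Nat.mod_eq_of_lt hβn, card_pos.1 hβ]

lemma exists_sizeLabel_eq (hPn : n ≤ #P + 1) (hPT₀ : (P ∩ T₀).Nonempty) (hP : (P \ T₀).Nonempty)
    (hn : 1 < n) (w : Fin n) : ∃ β ⊆ P, 0 < #β ∧ #β < n ∧ sizeLabel n T₀ β = w := by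
  obtain hw | hw | hw : (w : ℕ) = 0 ∨ (w : ℕ) = 1 ∨ 1 < (w : ℕ) := by omega
  · obtain ⟨x, hx⟩ := hPT₀
    rw [mem_inter] at hx
    refine ⟨{x}, singleton_subset_iff.2 hx.1, by simp, by simpa using hn, ?_⟩
    rw [sizeLabel, if_pos (by simpa using hx.2)]
    exact Fin.ext (by simp [hw])
  · obtain ⟨x, hx⟩ := hP
    rw [mem_sdiff] at hx
    refine ⟨{x}, singleton_subset_iff.2 hx.1, by simp, by simpa using hn, ?_⟩
    rw [sizeLabel, if_neg (by simpa using hx.2)]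
    exact Fin.ext (by simp [hw, Nat.mod_eq_of_lt hn])
  · obtain ⟨β, hβP, hβ⟩ := exists_subset_card_eq (s := P) (n := w) (by omega)
    refine ⟨β, hβP, by omega, by omega, ?_⟩
    rw [sizeLabel, if_neg (by omega), hβ]
    exact Fin.ext (by simp)

lemma exists_sizeLabel_mem {a b : ℕ} {Z : Finset (Fin n)} (ha : 0 < a) (hbP : b ≤ #P) (hbn : b < n)
    (hab : n + a < b + 1 + #Z) : ∃ β ⊆ P, a ≤ #β ∧ #β ≤ b ∧ sizeLabel n T₀ β ∈ Z := by
  have hsubset : ∀ k ∈ Icc a b, ∃ β ⊆ P, #β = k := fun k hk =>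
    exists_subset_card_eq ((mem_Icc.1 hk).2.trans hbP)
  choose! β hβP hβ using hsubset
  have hinj : Set.InjOn (fun k => sizeLabel n T₀ (β k)) (Icc a b) := by
    intro k hk l hl hkl
    have card_eq {m : ℕ} (hm : m ∈ Icc a b) : m = max (sizeLabel n T₀ (β m) : ℕ) 1 := by
      have := mem_Icc.1 hm
      rw [← card_eq_max_sizeLabel_one] <;> rw [hβ m hm] <;> omega
    rw [card_eq hk, card_eq hl]
    exact congrArg (fun w : Fin n => max (w : ℕ) 1) hkl
  obtain ⟨w, hw⟩ := inter_nonempty_of_card_lt_card_add_card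
    (subset_univ ((Icc a b).image fun k => sizeLabel n T₀ (β k))) (subset_univ Z) (by
      rw [card_image_of_injOn hinj, card_univ, Fintype.card_fin, Nat.card_Icc]; omega)
  obtain ⟨hwI, hwZ⟩ := mem_inter.1 hw
  obtain ⟨k, hk, rfl⟩ := mem_image.1 hwI
  obtain ⟨hak, hkb⟩ := mem_Icc.1 hk
  exact ⟨β k, hβP k hk, by rwa [hβ k hk], by rwa [hβ k hk], hwZ⟩

lemma isSpreading_sizeLabel [Fintype U] (hn : 3 ≤ n) (hT : #T = n + 1) (hTc : #Tᶜ = n + 1)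
    (hT₀T : T₀ ⊆ T) (hT₀ : #T₀ = 2) : IsSpreading (n + 1) T (fun B => sizeLabel n T₀ (B ∩ T)) := by
  intro Y Z hYZ hTY hTcY
  have hYsplit : #(Y ∩ T) + #(Y \ T) = #Y := card_inter_add_card_sdiff Y T
  have hp : #(Y ∩ T) < #T := card_lt_card
    ⟨inter_subset_right, fun hsub => hTY (hsub.trans inter_subset_left)⟩
  have hq : #(Y \ T) < #Tᶜ := by
    rw [sdiff_eq_inter_compl]
    exact card_lt_card ⟨inter_subset_right, fun hsub => hTcY (hsub.trans inter_subset_left)⟩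
  obtain ⟨β, hβ, hβpos, hβn, hβY, hβZ⟩ : ∃ β ⊆ Y ∩ T,
      0 < #β ∧ #β < n ∧ n ≤ #β + #(Y \ T) ∧ sizeLabel n T₀ β ∈ Z := by
    obtain hZ | hZ : #Z = 1 ∨ 2 ≤ #Z := by omega
    · obtain ⟨w, rfl⟩ := card_eq_one.1 hZ
      have hPT₀ : (Y ∩ T ∩ T₀).Nonempty :=
        inter_nonempty_of_card_lt_card_add_card inter_subset_right hT₀T (by omega)
      have hP : ((Y ∩ T) \ T₀).Nonempty :=
        sdiff_nonempty.2 fun hsub => by have := card_le_card hsub; omega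
      obtain ⟨β, hβ, hβpos, hβn, hβw⟩ :=
        exists_sizeLabel_eq (P := Y ∩ T) (by omega) hPT₀ hP (by omega) w
      exact ⟨β, hβ, hβpos, hβn, by omega, mem_singleton.2 hβw⟩
    · obtain ⟨β, hβ, haβ, hβb, hβZ⟩ := exists_sizeLabel_mem (P := Y ∩ T) (T₀ := T₀) (Z := Z)
        (a := max 1 (n - #(Y \ T))) (b := min #(Y ∩ T) (n - 1)) (by omega) (by omega) (by omega)
        (by omega)
      exact ⟨β, hβ, by omega, by omega, by omega, hβZ⟩
  obtain ⟨B, hBY, hB, rfl, hBmixed⟩ := exists_isMixed_inter_eq hβ hβpos hβn hβY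
  exact ⟨B, hBY, by rw [hB], hBmixed, hβZ⟩

end Spreading

end

theorem stmt_0 (h : ℕ) (hh : 4 ≤ h) :
    ∃ (n : ℕ) (E : Finset (Finset (Fin n))),
      IsUniform E (2 * h - 1) ∧
      NoPolychromatic3 E ∧
      HeavyRestrictedTwoColorable E h := by
  obtain ⟨n, rfl⟩ : ∃ n, h = n + 1 := ⟨h - 1, by omega⟩
  have : NeZero n := ⟨by omega⟩
  obtain ⟨T, hT⟩ : ∃ T : Finset (Fin (2 * (n + 1))), T.card = n + 1 := by
    simpa using Finset.exists_subset_card_eq (s := .univ) (n := n + 1) (by simp)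
  have hTc : Tᶜ.card = n + 1 := by rw [Finset.card_compl, Fintype.card_fin]; omega
  obtain ⟨T₀, hT₀T, hT₀⟩ := Finset.exists_subset_card_eq (s := T) (n := 2) (by omega)
  have hspread := isSpreading_sizeLabel (by omega) hT hTc hT₀T hT₀
  set f := fun B : Finset (Fin (2 * (n + 1))) => sizeLabel n T₀ (B ∩ T)
  let E := (coEdges (n + 1) T f 0).compls
  have hcard : Fintype.card (Fin (2 * (n + 1)) ⊕ Fin n) + 1 = 3 * (n + 1) := by
    simp only [Fintype.card_sum, Fintype.card_fin]; omega
  have hE : IsUniform E (2 * (n + 1) - 1) := by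
    convert isUniform_compls sized_coEdges using 1; omega
  have hpoly : NoPolychromatic3 E := noPolychromatic3_compls (by omega) fun B hB =>
    exists_coEdge_superset (by omega) hT hTc (by simp) hB
  have hheavy : HeavyRestrictedTwoColorable E (n + 1) :=
    heavyRestrictedTwoColorable_compls sized_coEdges
      (fun X hX => exists_subset_insert_notMem_coEdges (by omega) hT hTc hspread hX)
      (fun X hX => exists_subset_notMem_coEdges (by omega) hT hTc (by simp) hX)
  exact ⟨_, _, hE.map_equiv finSumFinEquiv, hpoly.map_equiv finSumFinEquiv,
    hheavy.map_equiv finSumFinEquiv⟩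
end

section
/- There exists a 5-uniform hypergraph which has no polychromatic 3-coloring, but all of whose 3-heavy restricted subhypergraphs are 2-colorable. -/
/-! Pass to complements: take twelve triples on eight points that cover every pair of points, and
let the edges be the complements of the triples. A 3-coloring of eight points has a color class
with at most two points; some triple contains it, so the complementary edge misses that color.

For the second property, restrict to `X`. An edge misses at most three vertices, so a trace with at
least three vertices contains at least half of `X`. If `X` is split into two halves, such a trace
can only be monochromatic if it equals one of the halves. Hence each edge rules out at most one
split, and there are more splits than edges whose trace has exactly that size. -/

open Finset
open scoped FinsetFamily

section General

variable {α : Type*}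

theorem noPolychromatic3_of_forall_exists_disjoint [Fintype α] {E : Finset (Finset α)} {k : ℕ}
    (hcard : Fintype.card α < 3 * (k + 1))
    (hmiss : ∀ s : Finset α, #s ≤ k → ∃ e ∈ E, Disjoint e s) : NoPolychromatic3 E := by
  intro c
  obtain ⟨i, hi⟩ : ∃ i, #{v | c v = i} < k + 1 :=
    Fintype.exists_card_fiber_lt_of_card_lt_mul c (by simpa using hcard)
  obtain ⟨e, he, hdisj⟩ := hmiss _ (Nat.lt_succ_iff.mp hi)
  exact ⟨e, he, i, fun v hv hvi => disjoint_left.mp hdisj hv (by simpa using hvi)⟩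

/-- 2-colorability of the hypergraph with edge family `F`: some coloring of the vertices with two
colors, encoded as `Bool`, leaves no edge of `F` monochromatic. -/
def IsTwoColorable (F : Finset (Finset α)) : Prop :=
  ∃ c : α → Bool, ∀ f ∈ F, (∃ v ∈ f, c v = true) ∧ (∃ v ∈ f, c v = false)

theorem isTwoColorable_of_not_subset_of_not_disjoint {F : Finset (Finset α)} (B : Finset α)
    (hB : ∀ f ∈ F, ¬ f ⊆ B ∧ ¬ Disjoint f B) : IsTwoColorable F := by
  classical
  refine ⟨fun v => decide (v ∈ B), fun f hf => ?_⟩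
  simpa only [decide_eq_true_eq, decide_eq_false_iff_not, not_subset, not_disjoint_iff]
    using (hB f hf).symm

theorem exists_mem_powersetCard_forall_ne_and_ne_sdiff [DecidableEq α] {X Y : Finset α}
    {G : Finset (Finset α)} {m : ℕ} (hYX : Y ⊆ X) (hY : #Y < 2 * m)
    (hG : ∀ f ∈ G, #f = m) (hcount : #G < (#Y).choose m) :
    ∃ B ∈ Y.powersetCard m, ∀ f ∈ G, f ≠ B ∧ f ≠ X \ B := by
  -- Two `m`-subsets of `Y` intersect, so `f` and `X \ f` are never both `m`-subsets of `Y`.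
  let excluded (f : Finset α) : Finset α := if f ⊆ Y then f else X \ f
  obtain ⟨B, hB, hBG⟩ : ∃ B ∈ Y.powersetCard m, B ∉ G.image excluded := by
    refine exists_mem_notMem_of_card_lt_card ?_
    rw [card_powersetCard]
    exact card_image_le.trans_lt hcount
  obtain ⟨hBY, hBm⟩ := mem_powersetCard.mp hB
  refine ⟨B, hB, fun f hf => ⟨?_, ?_⟩⟩
  · rintro rfl
    exact hBG (mem_image.mpr ⟨f, hf, if_pos hBY⟩)
  · rintro rfl
    have hnot : ¬ X \ B ⊆ Y := fun hsub => by
      have := card_le_card (union_subset hsub hBY)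
      rw [card_union_of_disjoint sdiff_disjoint, hG _ hf, hBm] at this
      omega
    exact hBG (mem_image.mpr
      ⟨X \ B, hf, (if_neg hnot).trans (Finset.sdiff_sdiff_eq_self (hBY.trans hYX))⟩)

/-- `(2 * m - 1).choose m` is the number of unordered splits of `X` into parts of sizes `m` and
`#X - m`: if `#X = 2 * m`, a split is determined by the part that avoids a fixed vertex. -/
theorem isTwoColorable_of_card_le_two_mul {X : Finset α} {F : Finset (Finset α)} {m : ℕ}
    (hXm : #X ≤ 2 * m) (hmX : 2 * m ≤ #X + 1) (hFX : ∀ f ∈ F, f ⊆ X)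
    (hhalf : ∀ f ∈ F, #X ≤ 2 * #f) (hcount : #{f ∈ F | #f = m} < (2 * m - 1).choose m) :
    IsTwoColorable F := by
  classical
  obtain rfl | hm := m.eq_zero_or_pos
  · have hpos : ∀ f ∈ F, #f ≠ 0 :=
      filter_eq_empty_iff.mp (card_eq_zero.mp (Nat.lt_one_iff.mp hcount))
    refine ⟨fun _ => true, fun f hf => absurd (card_le_card (hFX f hf)) ?_⟩
    have := hpos f hf
    omega
  obtain ⟨Y, hYX, hY⟩ : ∃ Y ⊆ X, #Y = 2 * m - 1 := exists_subset_card_eq (by omega)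
  obtain ⟨B, hB, hne⟩ := exists_mem_powersetCard_forall_ne_and_ne_sdiff hYX (by omega)
    (fun f hf => (mem_filter.mp hf).2) (hY ▸ hcount)
  obtain ⟨hBY, hBm⟩ := mem_powersetCard.mp hB
  have hcompl : #(X \ B) = #X - m := by rw [card_sdiff_of_subset (hBY.trans hYX), hBm]
  refine isTwoColorable_of_not_subset_of_not_disjoint B fun f hf => ⟨fun hfB => ?_, fun hfB => ?_⟩
  · have hfm : #f = m := by have := card_le_card hfB; have := hhalf f hf; omega
    exact (hne f (mem_filter.mpr ⟨hf, hfm⟩)).1 (eq_of_subset_of_card_le hfB (by omega))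
  · have hfXB : f ⊆ X \ B := subset_sdiff.mpr ⟨hFX f hf, hfB⟩
    have hfm : #f = m := by have := card_le_card hfXB; have := hhalf f hf; omega
    exact (hne f (mem_filter.mpr ⟨hf, hfm⟩)).2 (eq_of_subset_of_card_le hfXB (by omega))

theorem heavyRestrictedTwoColorable_of_card_lt_choose [Fintype α] [DecidableEq α]
    {E : Finset (Finset α)} {h : ℕ} (hcompl : ∀ e ∈ E, #eᶜ ≤ h)
    (hcount : ∀ (X : Finset α) (m : ℕ), h ≤ m → #X ≤ 2 * m → 2 * m ≤ #X + 1 →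
      #{e ∈ E | #(e ∩ X) = m} < (2 * m - 1).choose m) :
    HeavyRestrictedTwoColorable E h := by
  intro X F hF
  have hsub : ∀ f ∈ F, f ⊆ X := fun f hf => by
    obtain ⟨⟨e, -, rfl⟩, -⟩ := hF f hf
    exact inter_subset_right
  have hhalf : ∀ f ∈ F, #X ≤ 2 * #f := fun f hf => by
    obtain ⟨⟨e, he, rfl⟩, hheavy⟩ := hF f hf
    have hsplit : #X ≤ #(e ∩ X) + #eᶜ := by
      rw [inter_comm, ← card_inter_add_card_sdiff X e, sdiff_eq_inter_compl]
      gcongr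
      exact inter_subset_right
    have := hcompl e he
    omega
  obtain ⟨m, hXm, hmX⟩ : ∃ m, #X ≤ 2 * m ∧ 2 * m ≤ #X + 1 := ⟨(#X + 1) / 2, by omega, by omega⟩
  refine isTwoColorable_of_card_le_two_mul hXm hmX hsub hhalf ?_
  obtain hhm | hmh := le_or_gt h m
  · have htrace : {f ∈ F | #f = m} ⊆ {e ∈ E | #(e ∩ X) = m}.image (· ∩ X) := fun f hf => by
      obtain ⟨hfF, hfm⟩ := mem_filter.mp hf
      obtain ⟨⟨e, he, rfl⟩, -⟩ := hF f hfF
      exact mem_image_of_mem _ (mem_filter.mpr ⟨he, hfm⟩)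
    exact ((card_le_card htrace).trans card_image_le).trans_lt (hcount X m hhm hXm hmX)
  · have hempty : {f ∈ F | #f = m} = ∅ :=
      filter_eq_empty_iff.mpr fun f hf hfm => by have := (hF f hf).2; omega
    rw [hempty, card_empty]
    exact Nat.choose_pos (by omega)

end General

/-- Twelve triples of integers modulo 8 covering all pairs: two points at distance 1, 3 or 4 lie in
a translate of `{0, 1, 4}`, two points at distance 2 in one of the four other triples. -/
def pairCover : Finset (Finset (Fin 8)) :=
  univ.image (fun i => {i, i + 1, i + 4}) ∪ {{0, 2, 4}, {4, 6, 0}, {1, 3, 5}, {5, 7, 1}}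

theorem card_of_mem_pairCover : ∀ t ∈ pairCover, #t = 3 := by decide +kernel

theorem exists_mem_pairCover_superset :
    ∀ s : Finset (Fin 8), #s ≤ 2 → ∃ t ∈ pairCover, s ⊆ t := by decide +kernel

theorem card_pairCover : #pairCover = 12 := by decide +kernel

theorem card_filter_pairCover_compls_three_lt :
    ∀ X : Finset (Fin 8), 5 ≤ #X → #X ≤ 6 → #{e ∈ pairCoverᶜˢ | #(e ∩ X) = 3} < 10 := by
  decide +kernel

theorem card_filter_pairCover_compls_lt_choose (X : Finset (Fin 8)) (m : ℕ) (hm : 3 ≤ m)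
    (hXm : #X ≤ 2 * m) (hmX : 2 * m ≤ #X + 1) :
    #{e ∈ pairCoverᶜˢ | #(e ∩ X) = m} < (2 * m - 1).choose m := by
  have hX : #X ≤ 8 := card_le_univ X
  obtain rfl | rfl : m = 3 ∨ m = 4 := by omega
  · exact card_filter_pairCover_compls_three_lt X (by omega) hXm
  · refine (card_filter_le _ _).trans_lt ?_
    rw [card_compls, card_pairCover]
    decide

theorem stmt_1 :
    ∃ (n : ℕ) (E : Finset (Finset (Fin n))),
      IsUniform E 5 ∧
      NoPolychromatic3 E ∧
      HeavyRestrictedTwoColorable E 3 := by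
  refine ⟨8, pairCoverᶜˢ, forall_mem_compls.mpr fun t ht => ?_, ?_, ?_⟩
  · rw [card_compl, card_of_mem_pairCover t ht, Fintype.card_fin]
  · refine noPolychromatic3_of_forall_exists_disjoint (k := 2) (by decide) fun s hs => ?_
    obtain ⟨t, ht, hst⟩ := exists_mem_pairCover_superset s hs
    exact ⟨tᶜ, compl_mem_compls ht, disjoint_compl_left.mono_right hst⟩
  · refine heavyRestrictedTwoColorable_of_card_lt_choose (forall_mem_compls.mpr fun t ht => ?_)
      card_filter_pairCover_compls_lt_choose
    rw [compl_compl, card_of_mem_pairCover t ht]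
end

section
/- For every integer h ≥ 3, there exists a (2h−1)-uniform hypergraph which has no polychromatic 3-coloring, but all of whose h-heavy restricted subhypergraphs are 2-colorable. -/
/-!
The proof is by induction on `h`. Both the base case and the induction step glue a hypergraph `E`
without polychromatic 3-coloring to two families `G` and `P` on new vertices, such that whenever
all edges of `G` see three colors, every color is missed by some edge of `P`: the color missed by
an edge of `E` is then missed by a whole edge `e ∪ p`.

* Base case: `E` is one pair, `G` consists of the 5-subsets of a 6-set, and `P` of six triples such
  that every pair is disjoint from one of them. If all 5-subsets are polychromatic, every color
  occurs exactly twice on the 6-set, so some triple misses it. As there are only six triples,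
  counting subsets of a trace `Y` of the 6-set yields a 2-coloring of `Y` avoiding them.
* Induction step: the new vertices form a grid with a distinguished root column. `G` consists of
  the root column and all rows, and `P` of the pairs joining a root to a vertex of its row.
-/

open Finset

namespace PolychromaticTrace

section Bichromatic

variable {α β : Type*}

/-- The 2-coloring `c` uses both colors on `S`, that is, `S` is not monochromatic. -/
def IsBichromatic (c : α → Bool) (S : Finset α) : Prop :=
  (∃ v ∈ S, c v = true) ∧ ∃ v ∈ S, c v = false

lemma IsBichromatic.of_ne {c : α → Bool} {S : Finset α} {v w : α} (hv : v ∈ S) (hw : w ∈ S)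
    (h : c v ≠ c w) : IsBichromatic c S := by
  cases hcv : c v
  · exact ⟨⟨w, hw, by simpa [hcv] using h.symm⟩, ⟨v, hv, hcv⟩⟩
  · exact ⟨⟨v, hv, hcv⟩, ⟨w, hw, by simpa [hcv] using h.symm⟩⟩

lemma IsBichromatic.congr {c d : α → Bool} {S : Finset α} (hc : IsBichromatic c S)
    (h : ∀ v ∈ S, d v = c v) : IsBichromatic d S := by
  obtain ⟨⟨v, hv, hcv⟩, ⟨w, hw, hcw⟩⟩ := hc
  exact ⟨⟨v, hv, (h v hv).trans hcv⟩, ⟨w, hw, (h w hw).trans hcw⟩⟩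

lemma isBichromatic_map {f : α ↪ β} {c : β → Bool} {S : Finset α} :
    IsBichromatic c (S.map f) ↔ IsBichromatic (c ∘ f) S := by
  simp [IsBichromatic]

lemma IsBichromatic.of_toLeft {c : α ⊕ β → Bool} {S : Finset (α ⊕ β)}
    (h : IsBichromatic (c ∘ Sum.inl) S.toLeft) : IsBichromatic c S := by
  obtain ⟨⟨v, hv, hcv⟩, ⟨w, hw, hcw⟩⟩ := h
  exact ⟨⟨_, mem_toLeft.1 hv, hcv⟩, ⟨_, mem_toLeft.1 hw, hcw⟩⟩

lemma IsBichromatic.of_toRight {c : α ⊕ β → Bool} {S : Finset (α ⊕ β)}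
    (h : IsBichromatic (c ∘ Sum.inr) S.toRight) : IsBichromatic c S := by
  obtain ⟨⟨v, hv, hcv⟩, ⟨w, hw, hcw⟩⟩ := h
  exact ⟨⟨_, mem_toRight.1 hv, hcv⟩, ⟨_, mem_toRight.1 hw, hcw⟩⟩

lemma isBichromatic_decide_eq [DecidableEq α] {S : Finset α} {a : α} (ha : a ∈ S) (hS : 1 < #S) :
    IsBichromatic (fun v => decide (v = a)) S := by
  obtain ⟨b, hb, hba⟩ := exists_mem_ne hS a
  exact .of_ne ha hb (by simpa using hba)

lemma exists_isBichromatic (S : Finset α) : ∃ c : α → Bool, 1 < #S → IsBichromatic c S := by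
  classical
  obtain rfl | ⟨a, ha⟩ := S.eq_empty_or_nonempty
  · exact ⟨fun _ => true, by simp⟩
  · exact ⟨_, isBichromatic_decide_eq ha⟩

lemma heavyRestrictedTwoColorable_iff [DecidableEq α] {E : Finset (Finset α)} {h : ℕ} :
    HeavyRestrictedTwoColorable E h ↔
      ∀ X, ∃ c : α → Bool, ∀ e ∈ E, h ≤ #(e ∩ X) → IsBichromatic c (e ∩ X) := by
  constructor
  · intro hE X
    obtain ⟨c, hc⟩ := hE X ((E.image (· ∩ X)).filter (h ≤ #·)) (by grind)
    exact ⟨c, fun e he hcard => hc _ (mem_filter.2 ⟨mem_image_of_mem _ he, hcard⟩)⟩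
  · intro hE X F hF
    obtain ⟨c, hc⟩ := hE X
    refine ⟨c, fun f hf => ?_⟩
    obtain ⟨⟨e, he, rfl⟩, hcard⟩ := hF f hf
    exact hc e he hcard

end Bichromatic

section Embedding

variable {α β : Type*} [DecidableEq β] {E : Finset (Finset α)}

lemma _root_.IsUniform.image_map {m : ℕ} (hE : IsUniform E m) (f : α ↪ β) :
    IsUniform (E.image (Finset.map f)) m := by
  simpa [IsUniform] using hE

lemma _root_.NoPolychromatic3.image_map (hE : NoPolychromatic3 E) (f : α ↪ β) :
    NoPolychromatic3 (E.image (Finset.map f)) := by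
  intro c
  simpa using hE (c ∘ f)

lemma _root_.HeavyRestrictedTwoColorable.image_map [DecidableEq α] {h : ℕ}
    (hE : HeavyRestrictedTwoColorable E h) (f : α ↪ β) :
    HeavyRestrictedTwoColorable (E.image (Finset.map f)) h := by
  rw [heavyRestrictedTwoColorable_iff] at hE ⊢
  intro X
  obtain ⟨c, hc⟩ := hE (X.preimage f f.injective.injOn)
  refine ⟨Function.extend f c fun _ => false, forall_mem_image.2 fun e he hcard => ?_⟩
  have htrace : e.map f ∩ X = (e ∩ X.preimage f f.injective.injOn).map f := by
    ext v
    simp only [mem_inter, mem_map, mem_preimage]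
    grind
  rw [htrace, card_map] at hcard
  rw [htrace, isBichromatic_map, Function.extend_comp f.injective]
  exact hc e he hcard

end Embedding

lemma noPolychromatic3_of_card_lt {α : Type*} {E : Finset (Finset α)} {e : Finset α} (he : e ∈ E)
    (hcard : #e < 3) : NoPolychromatic3 E := by
  intro c
  have card_image_lt : #(e.image c) < #(univ : Finset (Fin 3)) := card_image_le.trans_lt hcard
  obtain ⟨i, -, hi⟩ := exists_mem_notMem_of_card_lt_card card_image_lt
  exact ⟨e, he, i, fun v hv hvi => hi (mem_image.2 ⟨v, hv, hvi⟩)⟩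

section Glue

variable {α β : Type*} [DecidableEq α] [DecidableEq β]

/-- The hypergraph on `α ⊕ β` whose edges are those of `G` together with all unions of an edge of
`E` and an edge of `P`. -/
def glue (E : Finset (Finset α)) (G P : Finset (Finset β)) : Finset (Finset (α ⊕ β)) :=
  G.image (disjSum ∅) ∪ image₂ disjSum E P

/-- Every 3-coloring for which all edges of `G` are polychromatic has, for each of the three
colors, an edge of `P` missing that color. -/
def ForcesMissing (G P : Finset (Finset β)) : Prop :=
  ∀ c : β → Fin 3, (∀ g ∈ G, ∀ i, ∃ v ∈ g, c v = i) → ∀ i, ∃ p ∈ P, ∀ v ∈ p, c v ≠ i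

variable {E : Finset (Finset α)} {G P : Finset (Finset β)}

lemma mem_glue {f : Finset (α ⊕ β)} :
    f ∈ glue E G P ↔ (∃ g ∈ G, disjSum ∅ g = f) ∨ ∃ e ∈ E, ∃ p ∈ P, disjSum e p = f := by
  simp [glue]

lemma _root_.IsUniform.glue {a b : ℕ} (hE : IsUniform E a) (hG : IsUniform G (a + b))
    (hP : IsUniform P b) : IsUniform (glue E G P) (a + b) := by
  intro f hf
  obtain ⟨g, hg, rfl⟩ | ⟨e, he, p, hp, rfl⟩ := mem_glue.1 hf
  · simp [hG g hg]
  · simp [hE e he, hP p hp]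

lemma _root_.NoPolychromatic3.glue (hE : NoPolychromatic3 E) (hGP : ForcesMissing G P) :
    NoPolychromatic3 (glue E G P) := by
  intro c
  by_contra! hpoly
  obtain ⟨e, he, i, hei⟩ := hE (c ∘ Sum.inl)
  obtain ⟨p, hp, hpi⟩ := hGP (c ∘ Sum.inr)
    (fun g hg i => by simpa using hpoly _ (mem_glue.2 (.inl ⟨g, hg, rfl⟩)) i) i
  obtain ⟨v, hv, hvi⟩ := hpoly _ (mem_glue.2 (.inr ⟨e, he, p, hp, rfl⟩)) i
  obtain ⟨a, ha, rfl⟩ | ⟨b, hb, rfl⟩ := mem_disjSum.1 hv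
  exacts [hei a ha hvi, hpi b hb hvi]

lemma toLeft_disjSum_inter (e : Finset α) (p : Finset β) (X : Finset (α ⊕ β)) :
    (disjSum e p ∩ X).toLeft = e ∩ X.toLeft := by
  rw [toLeft_inter, toLeft_disjSum]

lemma toRight_disjSum_inter (e : Finset α) (p : Finset β) (X : Finset (α ⊕ β)) :
    (disjSum e p ∩ X).toRight = p ∩ X.toRight := by
  rw [toRight_inter, toRight_disjSum]

lemma card_disjSum_inter (e : Finset α) (p : Finset β) (X : Finset (α ⊕ β)) :
    #(disjSum e p ∩ X) = #(e ∩ X.toLeft) + #(p ∩ X.toRight) := by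
  rw [← card_toLeft_add_card_toRight, toLeft_disjSum_inter, toRight_disjSum_inter]

lemma _root_.HeavyRestrictedTwoColorable.glue {h s : ℕ} (hh : 1 ≤ h)
    (hE : HeavyRestrictedTwoColorable E h) (hGP : HeavyRestrictedTwoColorable (G ∪ P) (s + 1)) :
    HeavyRestrictedTwoColorable (glue E G P) (h + s) := by
  rw [heavyRestrictedTwoColorable_iff] at hE hGP ⊢
  intro X
  obtain ⟨c, hc⟩ := hE X.toLeft
  obtain ⟨d, hd⟩ := hGP X.toRight
  have right_heavy {e : Finset α} {p : Finset β} (hp : p ∈ G ∪ P)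
      (hcard : s + 1 ≤ #(p ∩ X.toRight)) : IsBichromatic (Sum.elim c d) (disjSum e p ∩ X) := by
    refine .of_toRight ?_
    rw [toRight_disjSum_inter, Sum.elim_comp_inr]
    exact hd p hp hcard
  refine ⟨Sum.elim c d, fun f hf hcard => ?_⟩
  obtain ⟨g, hg, rfl⟩ | ⟨e, he, p, hp, rfl⟩ := mem_glue.1 hf
  · rw [card_disjSum_inter, empty_inter, card_empty] at hcard
    exact right_heavy (mem_union_left _ hg) (by omega)
  · rw [card_disjSum_inter] at hcard
    by_cases hp_heavy : s + 1 ≤ #(p ∩ X.toRight)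
    · exact right_heavy (mem_union_right _ hp) hp_heavy
    · refine .of_toLeft ?_
      rw [toLeft_disjSum_inter, Sum.elim_comp_inl]
      exact hc e he (by omega)

end Glue

section Grid

variable {ι κ : Type*} [Fintype ι] [Fintype κ] [DecidableEq ι] [DecidableEq κ]

/-- The root column `r` and all the rows of the grid `ι × κ`. -/
def gridFrame (ι : Type*) {κ : Type*} [Fintype ι] [Fintype κ] [DecidableEq ι] [DecidableEq κ]
    (r : κ) : Finset (Finset (ι × κ)) :=
  insert (univ ×ˢ {r}) (univ.image fun i => {i} ×ˢ univ)

/-- The pairs of vertices of the grid `ι × κ` in a common row, one of them in the root column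
`r`. -/
def rootPairs (ι : Type*) {κ : Type*} [Fintype ι] [Fintype κ] [DecidableEq ι] [DecidableEq κ]
    (r : κ) : Finset (Finset (ι × κ)) :=
  image₂ (fun i k => {(i, r), (i, k)}) univ {r}ᶜ

variable {r : κ}

lemma mem_gridFrame {g : Finset (ι × κ)} :
    g ∈ gridFrame ι r ↔ g = univ ×ˢ {r} ∨ ∃ i, {i} ×ˢ univ = g := by
  simp [gridFrame]

lemma mem_rootPairs {p : Finset (ι × κ)} :
    p ∈ rootPairs ι r ↔ ∃ i, ∃ k ≠ r, {(i, r), (i, k)} = p := by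
  simp [rootPairs]

lemma isUniform_gridFrame {m : ℕ} (hι : Fintype.card ι = m) (hκ : Fintype.card κ = m) :
    IsUniform (gridFrame ι r) m := by
  intro g hg
  obtain rfl | ⟨i, rfl⟩ := mem_gridFrame.1 hg
  · simpa using hι
  · simpa using hκ

lemma isUniform_rootPairs : IsUniform (rootPairs ι r) 2 := by
  intro p hp
  obtain ⟨i, k, hk, rfl⟩ := mem_rootPairs.1 hp
  exact card_pair (by simpa using hk.symm)

lemma forcesMissing_gridFrame_rootPairs : ForcesMissing (gridFrame ι r) (rootPairs ι r) := by
  intro c hc i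
  obtain ⟨j, l, hji, hli, hlj⟩ : ∃ j l, j ≠ i ∧ l ≠ i ∧ l ≠ j := by decide +revert
  obtain ⟨⟨a, r'⟩, har, haj⟩ := hc _ (mem_gridFrame.2 (.inl rfl)) j
  obtain rfl : r = r' := by simpa using har
  obtain ⟨⟨a', k⟩, hak, hkl⟩ := hc _ (mem_gridFrame.2 (.inr ⟨a, rfl⟩)) l
  obtain rfl : a = a' := by simpa using hak
  have hkr : k ≠ r := by
    rintro rfl
    exact hlj (hkl.symm.trans haj)
  exact ⟨_, mem_rootPairs.2 ⟨a, k, hkr, rfl⟩, by simp [haj, hkl, hji, hli]⟩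

-- Every non-root vertex whose root is present gets the color opposite to that of its root.
lemma heavyRestrictedTwoColorable_grid :
    HeavyRestrictedTwoColorable (gridFrame ι r ∪ rootPairs ι r) 2 := by
  rw [heavyRestrictedTwoColorable_iff]
  intro X
  obtain ⟨col, hcol⟩ := exists_isBichromatic (univ ×ˢ {r} ∩ X)
  choose row hrow using fun i : ι => exists_isBichromatic ({i} ×ˢ univ ∩ X)
  let c : ι × κ → Bool := fun v =>
    if v.2 = r then col v else if (v.1, r) ∈ X then !col (v.1, r) else row v.1 v
  have c_ne {i : ι} {k : κ} (hk : k ≠ r) (hi : (i, r) ∈ X) : c (i, k) ≠ c (i, r) := by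
    simp [c, hk, hi]
  refine ⟨c, fun f hf hcard => ?_⟩
  obtain hf | hf := mem_union.1 hf
  · obtain rfl | ⟨i, rfl⟩ := mem_gridFrame.1 hf
    · exact (hcol hcard).congr fun ⟨j, k⟩ hjk => if_pos (by grind)
    by_cases hi : (i, r) ∈ X
    · have hroot : (i, r) ∈ {i} ×ˢ univ ∩ X := by simpa using hi
      obtain ⟨⟨j, k⟩, hjk, hne⟩ := exists_mem_ne hcard (i, r)
      obtain rfl : j = i := by simp_all
      exact .of_ne hjk hroot (c_ne (by simpa using hne) hi)
    · refine (hrow i hcard).congr fun ⟨j, k⟩ hjk => ?_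
      obtain ⟨rfl, hkX⟩ : i = j ∧ (j, k) ∈ X := by simpa using hjk
      have hk : k ≠ r := by
        rintro rfl
        exact hi hkX
      simp [c, hk, hi]
  · obtain ⟨i, k, hk, rfl⟩ := mem_rootPairs.1 hf
    have hsub : {(i, r), (i, k)} ⊆ X :=
      inter_eq_left.1 (eq_of_subset_of_card_le inter_subset_left (card_le_two.trans hcard))
    rw [inter_eq_left.2 hsub]
    exact .of_ne (mem_insert_of_mem (mem_singleton_self _)) (mem_insert_self _ _)
      (c_ne hk (hsub (mem_insert_self _ _)))

end Grid

section TripleSystem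

variable {α : Type*}

/-- At most six triples on six points such that every pair of points is disjoint from one of the
triples. -/
structure IsPairAvoiding [Fintype α] (𝒯 : Finset (Finset α)) : Prop where
  card_points : Fintype.card α = 6
  card_le : #𝒯 ≤ 6
  uniform : IsUniform 𝒯 3
  exists_disjoint (S : Finset α) (hS : #S ≤ 2) : ∃ T ∈ 𝒯, Disjoint T S

/-- The triples `Aᵢ ∪ {v}` with `v ∈ Aᵢ₊₁`, where `A₀, A₁, A₂` are the pairs `{0, 1}`, `{2, 3}`,
`{4, 5}`, with indices modulo 3. -/
def cyclicTriples : Finset (Finset (Fin 6)) :=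
  {{0, 1, 2}, {0, 1, 3}, {2, 3, 4}, {2, 3, 5}, {4, 5, 0}, {4, 5, 1}}

lemma isPairAvoiding_cyclicTriples : IsPairAvoiding cyclicTriples where
  card_points := rfl
  card_le := by decide
  uniform := by unfold IsUniform; decide
  exists_disjoint := by decide

lemma IsPairAvoiding.forcesMissing [Fintype α] {𝒯 : Finset (Finset α)}
    (h𝒯 : IsPairAvoiding 𝒯) : ForcesMissing (univ.powersetCard 5) 𝒯 := by
  classical
  intro c hc i
  have two_le_card (j : Fin 3) : 2 ≤ #{v | c v = j} := by
    by_contra! hj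
    have hcompl : 5 ≤ #({v | c v = j} : Finset α)ᶜ := by
      rw [card_compl, h𝒯.card_points]
      omega
    obtain ⟨A, hA, hA_card⟩ := exists_subset_card_eq hcompl
    obtain ⟨v, hv, hvj⟩ := hc A (mem_powersetCard.2 ⟨subset_univ _, hA_card⟩) j
    simpa [hvj] using hA hv
  have sum_card : ∑ j, #{v | c v = j} = 6 := by
    rw [← h𝒯.card_points, ← card_univ,
      card_eq_sum_card_fiberwise (f := c) (t := univ) (by simp)]
  have card_le_two : #{v | c v = i} ≤ 2 := by
    rw [Fin.sum_univ_three] at sum_card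
    have := two_le_card 0
    have := two_le_card 1
    have := two_le_card 2
    fin_cases i <;> simp only [Fin.zero_eta, Fin.mk_one, Fin.reduceFinMk] <;> omega
  obtain ⟨T, hT, hdisj⟩ := h𝒯.exists_disjoint _ card_le_two
  exact ⟨T, hT, fun v hv hvi => disjoint_left.1 hdisj hv (by simpa using hvi)⟩

variable [DecidableEq α]

/-- On `Y`, the 2-coloring `c` uses both colors in every trace of size at least 3 of a set of five
vertices. -/
def SplitsFiveSets (c : α → Bool) (Y : Finset α) : Prop :=
  ∀ A : Finset α, #A = 5 → 3 ≤ #(A ∩ Y) → IsBichromatic c (A ∩ Y)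

lemma splitsFiveSets_of_card_le_three {c : α → Bool} {Y : Finset α} (hY : #Y ≤ 3)
    (hc : 1 < #Y → IsBichromatic c Y) : SplitsFiveSets c Y := by
  intro A _ hcard
  have htrace : A ∩ Y = Y := eq_of_subset_of_card_le inter_subset_right (hY.trans hcard)
  rw [htrace] at hcard ⊢
  exact hc (by omega)

variable [Fintype α]

lemma splitsFiveSets_decide_mem (hα : Fintype.card α = 6) {P Y : Finset α} (hPY : P ⊆ Y)
    (hP : 2 ≤ #P) (hQ : 2 ≤ #(Y \ P)) : SplitsFiveSets (fun v => decide (v ∈ P)) Y := by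
  intro A hA _
  have meets {S : Finset α} (hS : 2 ≤ #S) : (A ∩ S).Nonempty :=
    inter_nonempty_of_card_lt_card_add_card (subset_univ _) (subset_univ _)
      (by rw [card_univ]; omega)
  obtain ⟨v, hv⟩ := meets hP
  obtain ⟨w, hw⟩ := meets hQ
  simp only [mem_inter, mem_sdiff] at hv hw
  exact .of_ne (mem_inter.2 ⟨hv.1, hPY hv.2⟩) (mem_inter.2 ⟨hw.1, hw.2.1⟩) (by simp [hv, hw])

namespace IsPairAvoiding

variable {𝒯 : Finset (Finset α)}

-- A triple contained in `Y` exists and has no trace of size 2, so at most five of the at least six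
-- pairs in `Y` are traces.
lemma exists_pair_ne_inter (h𝒯 : IsPairAvoiding 𝒯) {Y : Finset α} (hY : 4 ≤ #Y) :
    ∃ P ⊆ Y, #P = 2 ∧ ∀ T ∈ 𝒯, T ∩ Y ≠ P := by
  obtain ⟨T₀, hT₀, hdisj⟩ := h𝒯.exists_disjoint Yᶜ (by rw [card_compl, h𝒯.card_points]; omega)
  have hT₀Y : T₀ ⊆ Y := disjoint_compl_right_iff.1 hdisj
  have card_lt : #((𝒯.erase T₀).image (· ∩ Y)) < #(Y.powersetCard 2) := by
    calc #((𝒯.erase T₀).image (· ∩ Y)) ≤ #(𝒯.erase T₀) := card_image_le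
      _ < 6 := (card_erase_lt_of_mem hT₀).trans_le h𝒯.card_le
      _ = Nat.choose 4 2 := rfl
      _ ≤ Nat.choose (#Y) 2 := Nat.choose_le_choose 2 hY
      _ = #(Y.powersetCard 2) := (card_powersetCard 2 Y).symm
  obtain ⟨P, hP, hP_trace⟩ := exists_mem_notMem_of_card_lt_card card_lt
  obtain ⟨hPY, hP_card⟩ := mem_powersetCard.1 hP
  refine ⟨P, hPY, hP_card, fun T hT hTP => ?_⟩
  obtain rfl | hne := eq_or_ne T T₀
  · rw [inter_eq_left.2 hT₀Y] at hTP
    have := h𝒯.uniform P (hTP ▸ hT)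
    omega
  · exact hP_trace (mem_image.2 ⟨T, mem_erase.2 ⟨hne, hT⟩, hTP⟩)

lemma exists_half_notMem (h𝒯 : IsPairAvoiding 𝒯) {Y : Finset α} (hY : 4 ≤ #Y) :
    ∃ P ⊆ Y, #P = #Y / 2 ∧ P ∉ 𝒯 ∧ Y \ P ∉ 𝒯 := by
  have hY_le : #Y ≤ 6 := h𝒯.card_points ▸ card_le_univ Y
  have notMem_of_card {S : Finset α} (hS : #S = 2) : S ∉ 𝒯 := fun hmem => by
    have := h𝒯.uniform S hmem
    omega
  have card_sdiff_image : #(𝒯.image (Y \ ·)) ≤ 6 := card_image_le.trans h𝒯.card_le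
  have notMem_sdiff {P : Finset α} (hPY : P ⊆ Y) (hP : P ∉ 𝒯.image (Y \ ·)) : Y \ P ∉ 𝒯 :=
    fun hmem => hP (mem_image.2 ⟨_, hmem, Finset.sdiff_sdiff_eq_self hPY⟩)
  obtain hY_card | hY_card | hY_card : #Y = 4 ∨ #Y = 5 ∨ #Y = 6 := by omega
  · obtain ⟨P, hPY, hP_card⟩ := exists_subset_card_eq (show 2 ≤ #Y by omega)
    refine ⟨P, hPY, by omega, notMem_of_card hP_card, notMem_of_card ?_⟩
    rw [card_sdiff_of_subset hPY]
    omega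
  · have card_lt : #(𝒯.image (Y \ ·)) < #(Y.powersetCard 2) := by
      rw [card_powersetCard, hY_card]
      exact card_sdiff_image.trans_lt (by decide)
    obtain ⟨P, hP, hP_not⟩ := exists_mem_notMem_of_card_lt_card card_lt
    obtain ⟨hPY, hP_card⟩ := mem_powersetCard.1 hP
    exact ⟨P, hPY, by omega, notMem_of_card hP_card, notMem_sdiff hPY hP_not⟩
  · have card_lt : #(𝒯 ∪ 𝒯.image (Y \ ·)) < #(Y.powersetCard 3) := by
      rw [card_powersetCard, hY_card]
      calc #(𝒯 ∪ 𝒯.image (Y \ ·)) ≤ 6 + 6 :=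
            (card_union_le _ _).trans (add_le_add h𝒯.card_le card_sdiff_image)
        _ < Nat.choose 6 3 := by decide
    obtain ⟨P, hP, hP_not⟩ := exists_mem_notMem_of_card_lt_card card_lt
    obtain ⟨hPY, hP_card⟩ := mem_powersetCard.1 hP
    rw [notMem_union] at hP_not
    exact ⟨P, hPY, by omega, hP_not.1, notMem_sdiff hPY hP_not.2⟩

lemma exists_splitsFiveSets_isBichromatic (h𝒯 : IsPairAvoiding 𝒯) (Y : Finset α) :
    ∃ c : α → Bool, SplitsFiveSets c Y ∧
      ∀ T ∈ 𝒯, 3 ≤ #(T ∩ Y) → IsBichromatic c (T ∩ Y) := by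
  obtain hY | hY := le_or_gt #Y 3
  · obtain ⟨c, hc⟩ := exists_isBichromatic Y
    refine ⟨c, splitsFiveSets_of_card_le_three hY hc, fun T _ hT_card => ?_⟩
    have htrace : T ∩ Y = Y := eq_of_subset_of_card_le inter_subset_right (hY.trans hT_card)
    rw [htrace] at hT_card ⊢
    exact hc (by omega)
  obtain ⟨P, hPY, hP_card, hP, hQ⟩ := h𝒯.exists_half_notMem hY
  have hY_le : #Y ≤ 6 := h𝒯.card_points ▸ card_le_univ Y
  have hQ_card : #(Y \ P) = #Y - #P := card_sdiff_of_subset hPY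
  refine ⟨_, splitsFiveSets_decide_mem h𝒯.card_points hPY (by omega) (by omega),
    fun T hT hT_card => ?_⟩
  have hT_three := h𝒯.uniform T hT
  have hTY : T ⊆ Y :=
    inter_eq_left.1 (eq_of_subset_of_card_le inter_subset_left (hT_three.trans_le hT_card))
  have triple_not_subset {S : Finset α} (hS_card : #S ≤ 3) (hS : S ∉ 𝒯) : ¬T ⊆ S := fun hTS =>
    hS (eq_of_subset_of_card_le hTS (hS_card.trans hT_three.ge) ▸ hT)
  obtain ⟨v, hvT, hvP⟩ := not_subset.1 (triple_not_subset (by omega) hP)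
  obtain ⟨w, hwT, hwQ⟩ := not_subset.1 (triple_not_subset (by omega) hQ)
  have hwP : w ∈ P := by simpa [hTY hwT] using hwQ
  rw [inter_eq_left.2 hTY]
  exact .of_ne hwT hvT (by simp [hvP, hwP])

lemma exists_splitsFiveSets_exists_false (h𝒯 : IsPairAvoiding 𝒯) (Y : Finset α) :
    ∃ c : α → Bool, SplitsFiveSets c Y ∧
      ∀ T ∈ 𝒯, 2 ≤ #(T ∩ Y) → ∃ v ∈ T ∩ Y, c v = false := by
  obtain hY | hY := le_or_gt #Y 3
  · obtain rfl | ⟨a, ha⟩ := Y.eq_empty_or_nonempty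
    · exact ⟨fun _ => true, splitsFiveSets_of_card_le_three hY (by simp), by simp⟩
    refine ⟨_, splitsFiveSets_of_card_le_three hY (isBichromatic_decide_eq ha),
      fun T _ hT_card => ?_⟩
    obtain ⟨b, hb, hba⟩ := exists_mem_ne hT_card a
    exact ⟨b, hb, by simpa using hba⟩
  obtain ⟨P, hPY, hP_card, hP⟩ := h𝒯.exists_pair_ne_inter hY
  have hQ_card : #(Y \ P) = #Y - #P := card_sdiff_of_subset hPY
  refine ⟨_, splitsFiveSets_decide_mem h𝒯.card_points hPY hP_card.ge (by omega),
    fun T hT hT_card => ?_⟩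
  have hTP : ¬T ∩ Y ⊆ P := fun hsub =>
    hP T hT (eq_of_subset_of_card_le hsub (hP_card.trans_le hT_card))
  obtain ⟨v, hv, hvP⟩ := not_subset.1 hTP
  exact ⟨v, hv, by simpa using hvP⟩

lemma exists_coloring_trace (h𝒯 : IsPairAvoiding 𝒯) (X : Finset (Bool ⊕ α)) :
    ∃ (d : Bool → Bool) (c : α → Bool), SplitsFiveSets c X.toRight ∧
      ∀ T ∈ 𝒯, 3 ≤ #(disjSum univ T ∩ X) →
        IsBichromatic (Sum.elim d c) (disjSum univ T ∩ X) := by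
  simp only [card_disjSum_inter, univ_inter]
  have mem_trace {T : Finset α} {b : Bool} (hb : b ∈ X.toLeft) :
      Sum.inl b ∈ disjSum univ T ∩ X := by simpa using hb
  obtain ⟨c, hc, hc_false⟩ := h𝒯.exists_splitsFiveSets_exists_false X.toRight
  have card_apices : #X.toLeft ≤ 2 := card_le_univ X.toLeft
  obtain h0 | h1 | h2 : #X.toLeft = 0 ∨ #X.toLeft = 1 ∨ #X.toLeft = 2 := by omega
  · obtain ⟨c', hc', hc'_bi⟩ := h𝒯.exists_splitsFiveSets_isBichromatic X.toRight
    refine ⟨id, c', hc', fun T hT hT_card => .of_toRight ?_⟩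
    rw [toRight_disjSum_inter, Sum.elim_comp_inr]
    exact hc'_bi T hT (by omega)
  · obtain ⟨b, hb⟩ := card_pos.1 (h1 ▸ one_pos)
    refine ⟨fun _ => true, c, hc, fun T hT hT_card => ?_⟩
    obtain ⟨v, hv, hcv⟩ := hc_false T hT (by omega)
    have hv_trace : Sum.inr v ∈ disjSum univ T ∩ X := by simpa using hv
    exact .of_ne (mem_trace hb) hv_trace (by simp [hcv])
  · have apices_mem (b : Bool) : b ∈ X.toLeft := (card_eq_iff_eq_univ _).1 h2 ▸ mem_univ b
    exact ⟨id, c, hc, fun T _ _ =>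
      .of_ne (mem_trace (apices_mem true)) (mem_trace (apices_mem false)) (by simp)⟩

lemma heavyRestrictedTwoColorable_glue (h𝒯 : IsPairAvoiding 𝒯) :
    HeavyRestrictedTwoColorable (glue {(univ : Finset Bool)} (univ.powersetCard 5) 𝒯) 3 := by
  rw [heavyRestrictedTwoColorable_iff]
  intro X
  obtain ⟨d, c, hc, hc_triples⟩ := h𝒯.exists_coloring_trace X
  refine ⟨Sum.elim d c, fun f hf hcard => ?_⟩
  obtain ⟨A, hA, rfl⟩ | ⟨e, he, T, hT, rfl⟩ := mem_glue.1 hf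
  · rw [card_disjSum_inter, empty_inter, card_empty, zero_add] at hcard
    refine .of_toRight ?_
    rw [toRight_disjSum_inter, Sum.elim_comp_inr]
    exact hc A (mem_powersetCard.1 hA).2 hcard
  · obtain rfl := mem_singleton.1 he
    exact hc_triples T hT hcard

lemma isUniform_glue (h𝒯 : IsPairAvoiding 𝒯) :
    IsUniform (glue {(univ : Finset Bool)} (univ.powersetCard 5) 𝒯) 5 := by
  have hpair : IsUniform {(univ : Finset Bool)} 2 := by simp [IsUniform]
  exact hpair.glue (b := 3) (fun A hA => (mem_powersetCard.1 hA).2) h𝒯.uniform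

end IsPairAvoiding

end TripleSystem

end PolychromaticTrace

open PolychromaticTrace

theorem stmt_2 (h : ℕ) (hh : 3 ≤ h) :
    ∃ (n : ℕ) (E : Finset (Finset (Fin n))),
      IsUniform E (2 * h - 1) ∧
      NoPolychromatic3 E ∧
      HeavyRestrictedTwoColorable E h := by
  induction h, hh using Nat.le_induction with
  | base =>
    have h𝒯 := isPairAvoiding_cyclicTriples
    let φ := (Fintype.equivFin (Bool ⊕ Fin 6)).toEmbedding
    have hpair : NoPolychromatic3 {(univ : Finset Bool)} :=
      noPolychromatic3_of_card_lt (mem_singleton_self _) (by decide)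
    exact ⟨_, _, h𝒯.isUniform_glue.image_map φ,
      (hpair.glue h𝒯.forcesMissing).image_map φ,
      h𝒯.heavyRestrictedTwoColorable_glue.image_map φ⟩
  | succ h hh ih =>
    obtain ⟨n, E, hE_uniform, hE_poly, hE_heavy⟩ := ih
    let m := 2 * h - 1 + 2
    have hm : 2 * (h + 1) - 1 = m := by omega
    let φ := (Fintype.equivFin (Fin n ⊕ Fin m × Fin m)).toEmbedding
    have hgrid : IsUniform (gridFrame (Fin m) (0 : Fin m)) m :=
      isUniform_gridFrame (Fintype.card_fin m) (Fintype.card_fin m)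
    rw [hm]
    exact ⟨_, _, (hE_uniform.glue hgrid isUniform_rootPairs).image_map φ,
      (hE_poly.glue forcesMissing_gridFrame_rootPairs).image_map φ,
      (hE_heavy.glue (by omega) heavyRestrictedTwoColorable_grid).image_map φ⟩
end

section
/- Let h ≥ 2, let V be a set of size 3h−1, and let K be a family of h-element subsets of V satisfying (K1), (K2) and (K3). Let G be the family of all h-element subsets of V not in K, and let H be the hypergraph on V whose edges are the complements V \ B for B ∈ G. Then H is (2h−1)-uniform, H has no polychromatic 3-coloring, and every h-heavy restricted subhypergraph of H is 2-colorable. -/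
/-- The edges of the hypergraph `H`: complements `V \ B` of the `h`-element
subsets `B` of `V` that do not belong to `K`. -/
def complEdges {α : Type*} [DecidableEq α]
    (V : Finset α) (h : ℕ) (K : Finset (Finset α)) : Finset (Finset α) :=
  (V.powersetCard h \ K).image (fun B => V \ B)

/-!
A colouring of `V` by `k` colours, where `|V| < k * h`, has a colour class of at most `h - 1`
elements. By (K1) some `h`-set outside `K` contains that class, so its complement is an edge missing
a colour.

For the traces, a set `R ⊆ X` and its complement 2-colour the trace `X \ B` unless `B` contains
`R` or `X \ R`. If `|X| ≥ 2h`, take the two halves in `K` that (K2) provides for a `2h`-subset of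
`X`: an `h`-set containing one of them is equal to it, hence lies in `K`. If `|X| = 2h - 1`, take
the set `U` that (K3) provides for `Y = V \ X`, which has `|V| + 1 - 2h` elements: a heavy trace
does not fit into `U`, and an `h`-set `B ∉ K` containing `U` lies inside `X`, so that `X \ B` has
only `h - 1` elements. If `|X| ≤ 2h - 2`, halve `X`.
-/

section

variable {α : Type*}

/-- `R` splits `e` if `e` has an element in `R` and one outside `R`. The set `R` encodes the
2-colouring with classes `R` and its complement, and `e` is then not monochromatic. -/
def Splits (R e : Finset α) : Prop :=
  (∃ v ∈ e, v ∈ R) ∧ ∃ v ∈ e, v ∉ R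

lemma Splits.mono {R e f : Finset α} (he : Splits R e) (hef : e ⊆ f) : Splits R f :=
  ⟨he.1.imp fun _ hv => ⟨hef hv.1, hv.2⟩, he.2.imp fun _ hv => ⟨hef hv.1, hv.2⟩⟩

lemma splits_of_card_lt {R X e : Finset α} (hRX : R ⊆ X) (heX : e ⊆ X) (hR : R.card < e.card)
    (hX : X.card < R.card + e.card) : Splits R e := by
  classical
  have hRc : (X \ R).card < e.card := by
    rw [Finset.card_sdiff_of_subset hRX]
    omega
  obtain ⟨v, hv, hvR⟩ := Finset.exists_mem_notMem_of_card_lt_card hRc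
  obtain ⟨w, hw, hwR⟩ := Finset.exists_mem_notMem_of_card_lt_card hR
  exact ⟨⟨v, hv, by simpa [heX hv] using hvR⟩, w, hw, hwR⟩

lemma exists_forall_splits_of_card_add_two_le {h : ℕ} {X : Finset α} (hX : X.card + 2 ≤ 2 * h) :
    ∃ R, ∀ e ⊆ X, h ≤ e.card → Splits R e := by
  obtain ⟨R, hRX, hR⟩ := Finset.exists_subset_card_eq (Nat.div_le_self X.card 2)
  exact ⟨R, fun e heX he => splits_of_card_lt hRX heX (by omega) (by omega)⟩

variable [DecidableEq α]

lemma splits_sdiff {R X B : Finset α} (hRX : R ⊆ X) (hR : ¬ R ⊆ B) (hRc : ¬ X \ R ⊆ B) :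
    Splits R (X \ B) := by
  obtain ⟨v, hvR, hvB⟩ := Finset.not_subset.1 hR
  obtain ⟨w, hw, hwB⟩ := Finset.not_subset.1 hRc
  obtain ⟨hwX, hwR⟩ := Finset.mem_sdiff.1 hw
  exact ⟨⟨v, Finset.mem_sdiff.2 ⟨hRX hvR, hvB⟩, hvR⟩, w, Finset.mem_sdiff.2 ⟨hwX, hwB⟩, hwR⟩

lemma splits_sdiff_of_mem_of_sdiff_mem {K : Finset (Finset α)} {R X B : Finset α}
    (hRX : R ⊆ X) (hR : R.card = B.card) (hX : X.card = 2 * B.card)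
    (hRK : R ∈ K) (hRcK : X \ R ∈ K) (hBK : B ∉ K) : Splits R (X \ B) := by
  have hRc : (X \ R).card = B.card := by
    rw [Finset.card_sdiff_of_subset hRX]
    omega
  refine splits_sdiff hRX (fun hRB => hBK ?_) (fun hRB => hBK ?_)
  · rwa [← Finset.eq_of_subset_of_card_le hRB hR.ge]
  · rwa [← Finset.eq_of_subset_of_card_le hRB hRc.ge]

lemma splits_sdiff_of_forall_insert_mem {K : Finset (Finset α)} {U X B : Finset α}
    (hUX : U ⊆ X) (hU : U.card + 1 = B.card) (hX : X.card < 2 * B.card)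
    (hUK : ∀ y ∈ B \ X, insert y U ∈ K) (hBK : B ∉ K) (hXB : B.card ≤ (X \ B).card) :
    Splits U (X \ B) := by
  refine splits_sdiff hUX (fun hUB => ?_) (fun hUB => ?_)
  · obtain ⟨y, -, rfl⟩ := Finset.exists_eq_insert_iff.2 ⟨hUB, hU⟩
    have hyX : y ∈ X := by
      by_contra hyX
      exact hBK (hUK y (Finset.mem_sdiff.2 ⟨Finset.mem_insert_self y U, hyX⟩))
    have hcard := Finset.card_sdiff_of_subset (Finset.insert_subset hyX hUX)
    omega
  · have hcard := Finset.card_le_card (sdiff_le_comm.1 hUB)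
    omega

lemma exists_forall_splits_sdiff {h : ℕ} {V : Finset α} {K : Finset (Finset α)}
    (hK2 : ∀ X ∈ V.powersetCard (2 * h), ∃ R ⊆ X, R.card = h ∧ R ∈ K ∧ X \ R ∈ K)
    (hK3 : ∀ Y ∈ V.powersetCard (V.card + 1 - 2 * h),
      ∃ U ⊆ V \ Y, U.card = h - 1 ∧ ∀ y ∈ Y, insert y U ∈ K)
    {X : Finset α} (hXV : X ⊆ V) :
    ∃ R, ∀ B ∈ V.powersetCard h \ K, h ≤ (X \ B).card → Splits R (X \ B) := by
  simp only [Finset.mem_sdiff, Finset.mem_powersetCard]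
  obtain hX | hX | hX : 2 * h ≤ X.card ∨ X.card + 1 = 2 * h ∨ X.card + 2 ≤ 2 * h := by omega
  · obtain ⟨X', hX'X, hX'⟩ := Finset.exists_subset_card_eq hX
    obtain ⟨R, hRX', hR, hRK, hRcK⟩ :=
      hK2 X' (Finset.mem_powersetCard.2 ⟨hX'X.trans hXV, hX'⟩)
    refine ⟨R, fun B ⟨⟨_, hB⟩, hBK⟩ _ => ?_⟩
    have hsplits : Splits R (X' \ B) := splits_sdiff_of_mem_of_sdiff_mem hRX' (hR.trans hB.symm)
      (hX'.trans (congrArg (2 * ·) hB.symm)) hRK hRcK hBK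
    exact hsplits.mono (Finset.sdiff_subset_sdiff hX'X Finset.Subset.rfl)
  · have hY : (V \ X).card = V.card + 1 - 2 * h := by
      rw [Finset.card_sdiff_of_subset hXV]
      omega
    obtain ⟨U, hU, hUcard, hUK⟩ :=
      hK3 (V \ X) (Finset.mem_powersetCard.2 ⟨Finset.sdiff_subset, hY⟩)
    rw [Finset.sdiff_sdiff_eq_self hXV] at hU
    refine ⟨U, fun B ⟨⟨hBV, hB⟩, hBK⟩ hXB => ?_⟩
    exact splits_sdiff_of_forall_insert_mem hU (by omega) (by omega)
      (fun y hy => hUK y (Finset.sdiff_subset_sdiff hBV Finset.Subset.rfl hy)) hBK (hB.trans_le hXB)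
  · obtain ⟨R, hR⟩ := exists_forall_splits_of_card_add_two_le hX
    exact ⟨R, fun B _ => hR _ Finset.sdiff_subset⟩

lemma card_of_mem_complEdges {h : ℕ} {V e : Finset α} {K : Finset (Finset α)}
    (he : e ∈ complEdges V h K) : e.card = V.card - h := by
  obtain ⟨B, hB, rfl⟩ := Finset.mem_image.1 he
  obtain ⟨hBV, hBcard⟩ := Finset.mem_powersetCard.1 (Finset.mem_sdiff.1 hB).1
  rw [Finset.card_sdiff_of_subset hBV, hBcard]

lemma exists_mem_complEdges_forall_ne {ι : Type*} [Fintype ι] {h : ℕ} {V : Finset α}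
    {K : Finset (Finset α)} (hle : h ≤ V.card) (hlt : V.card < Fintype.card ι * h)
    (hK1 : ∀ A ∈ V.powersetCard (h - 1), ∃ v ∈ V \ A, insert v A ∉ K) (c : α → ι) :
    ∃ e ∈ complEdges V h K, ∃ i, ∀ v ∈ e, c v ≠ i := by
  classical
  obtain ⟨i, -, hi⟩ := Finset.exists_card_fiber_lt_of_card_lt_mul (s := V) (f := c) hlt
  obtain ⟨A, hiA, hAV, hA⟩ := Finset.exists_subsuperset_card_eq
    (Finset.filter_subset (c · = i) V) (Nat.le_sub_one_of_lt hi) (by omega)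
  obtain ⟨v, hv, hvK⟩ := hK1 A (Finset.mem_powersetCard.2 ⟨hAV, hA⟩)
  obtain ⟨hvV, hvA⟩ := Finset.mem_sdiff.1 hv
  have hvAcard : (insert v A).card = h := by
    rw [Finset.card_insert_of_notMem hvA]
    omega
  refine ⟨V \ insert v A, Finset.mem_image_of_mem _ (Finset.mem_sdiff.2
    ⟨Finset.mem_powersetCard.2 ⟨Finset.insert_subset hvV hAV, hvAcard⟩, hvK⟩), i, ?_⟩
  intro w hw hwi
  obtain ⟨hwV, hwA⟩ := Finset.mem_sdiff.1 hw
  exact hwA (Finset.mem_insert_of_mem (hiA (Finset.mem_filter.2 ⟨hwV, hwi⟩)))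

lemma exists_forall_splits_of_heavy_trace {h : ℕ} {V : Finset α} {K : Finset (Finset α)}
    (hK2 : ∀ X ∈ V.powersetCard (2 * h), ∃ R ⊆ X, R.card = h ∧ R ∈ K ∧ X \ R ∈ K)
    (hK3 : ∀ Y ∈ V.powersetCard (V.card + 1 - 2 * h),
      ∃ U ⊆ V \ Y, U.card = h - 1 ∧ ∀ y ∈ Y, insert y U ∈ K)
    {X : Finset α} (hXV : X ⊆ V) :
    ∃ R, ∀ e ∈ complEdges V h K, h ≤ (e ∩ X).card → Splits R (e ∩ X) := by
  obtain ⟨R, hR⟩ := exists_forall_splits_sdiff hK2 hK3 hXV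
  refine ⟨R, Finset.forall_mem_image.2 fun B hB => ?_⟩
  rw [Finset.inter_comm, ← Finset.inter_sdiff_assoc, Finset.inter_eq_left.2 hXV]
  exact hR B hB

theorem stmt_3_general {ι : Type*} [Fintype ι] {h : ℕ} {V : Finset α} {K : Finset (Finset α)}
    (hle : h ≤ V.card) (hlt : V.card < Fintype.card ι * h)
    (hK1 : ∀ A ∈ V.powersetCard (h - 1), ∃ v ∈ V \ A, insert v A ∉ K)
    (hK2 : ∀ X ∈ V.powersetCard (2 * h), ∃ R ⊆ X, R.card = h ∧ R ∈ K ∧ X \ R ∈ K)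
    (hK3 : ∀ Y ∈ V.powersetCard (V.card + 1 - 2 * h),
      ∃ U ⊆ V \ Y, U.card = h - 1 ∧ ∀ y ∈ Y, insert y U ∈ K) :
    (∀ e ∈ complEdges V h K, e.card = V.card - h) ∧
    (∀ c : α → ι, ∃ e ∈ complEdges V h K, ∃ i, ∀ v ∈ e, c v ≠ i) ∧
    (∀ X ⊆ V, ∀ F : Finset (Finset α),
      (∀ f ∈ F, (∃ e ∈ complEdges V h K, f = e ∩ X) ∧ h ≤ f.card) →
      ∃ c : α → Bool, ∀ f ∈ F, (∃ v ∈ f, c v = true) ∧ (∃ v ∈ f, c v = false)) := by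
  refine ⟨fun _ => card_of_mem_complEdges, exists_mem_complEdges_forall_ne hle hlt hK1,
    fun X hXV F hF => ?_⟩
  obtain ⟨R, hR⟩ := exists_forall_splits_of_heavy_trace hK2 hK3 hXV
  refine ⟨fun v => decide (v ∈ R), fun f hf => ?_⟩
  obtain ⟨⟨e, he, rfl⟩, hheavy⟩ := hF f hf
  simpa only [Splits, decide_eq_true_eq, decide_eq_false_iff_not] using hR e he hheavy

end

theorem stmt_3 {α : Type*} [DecidableEq α] (h : ℕ) (hh : 2 ≤ h)
    (V : Finset α) (hV : V.card = 3 * h - 1)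
    (K : Finset (Finset α)) (hKsub : K ⊆ V.powersetCard h)
    (hK1 : ∀ A ∈ V.powersetCard (h - 1), ∃ v ∈ V \ A, insert v A ∉ K)
    (hK2 : ∀ X ∈ V.powersetCard (2 * h),
      ∃ R ⊆ X, R.card = h ∧ R ∈ K ∧ X \ R ∈ K)
    (hK3 : ∀ Y ∈ V.powersetCard h,
      ∃ U ⊆ V \ Y, U.card = h - 1 ∧ ∀ y ∈ Y, insert y U ∈ K) :
    -- `H` is `(2h-1)`-uniform
    (∀ e ∈ complEdges V h K, e.card = 2 * h - 1) ∧
    -- `H` has no polychromatic 3-coloring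
    (∀ c : α → Fin 3, ∃ e ∈ complEdges V h K, ∃ i : Fin 3, ∀ v ∈ e, c v ≠ i) ∧
    -- every `h`-heavy restricted subhypergraph of `H` is 2-colorable
    (∀ X ⊆ V, ∀ F : Finset (Finset α),
      (∀ f ∈ F, (∃ e ∈ complEdges V h K, f = e ∩ X) ∧ h ≤ f.card) →
      ∃ c : α → Bool, ∀ f ∈ F, (∃ v ∈ f, c v = true) ∧ (∃ v ∈ f, c v = false)) := by
  have huniform : V.card - h = 2 * h - 1 := by omega
  have hcompl : V.card + 1 - 2 * h = h := by omega
  simpa only [huniform] using stmt_3_general (ι := Fin 3) (by omega)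
    (by rw [Fintype.card_fin]; omega) hK1 hK2 (by rwa [hcompl])
end

section
/- Let h ≥ 2, let V be a set of size 3h−1, and let K be a family of h-element subsets of V satisfying (K1). Let H be the hypergraph on V whose edges are the sets V \ B where B ranges over the h-element subsets of V not in K. Then H has no polychromatic 3-coloring: for every coloring of V with 3 colors, some edge of H misses one of the color classes. -/
/-!
Some color class has at most `h - 1` vertices. Enlarge it to an `(h - 1)`-subset of `V`; by (K1)
this extends by one vertex to an `h`-set `B ∉ K`, and the edge `V \ B` misses that color.
-/

section

variable {α : Type*} [DecidableEq α] {V : Finset α} {K : Finset (Finset α)}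

theorem sdiff_mem_complEdges {B : Finset α} {h : ℕ} (hBV : B ⊆ V) (hB : B.card = h)
    (hBK : B ∉ K) : V \ B ∈ complEdges V h K :=
  Finset.mem_image_of_mem _ (Finset.mem_sdiff.2 ⟨Finset.mem_powersetCard.2 ⟨hBV, hB⟩, hBK⟩)

theorem exists_superset_card_eq_succ_notMem {S : Finset α} {r : ℕ} (hr : r ≤ V.card)
    (hK : ∀ A ∈ V.powersetCard r, ∃ v ∈ V \ A, insert v A ∉ K)
    (hSV : S ⊆ V) (hS : S.card ≤ r) :
    ∃ B, S ⊆ B ∧ B ⊆ V ∧ B.card = r + 1 ∧ B ∉ K := by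
  obtain ⟨A, hSA, hAV, rfl⟩ := Finset.exists_subsuperset_card_eq hSV hS hr
  obtain ⟨v, hv, hvK⟩ := hK A (Finset.mem_powersetCard.2 ⟨hAV, rfl⟩)
  obtain ⟨hvV, hvA⟩ := Finset.mem_sdiff.1 hv
  exact ⟨insert v A, hSA.trans (Finset.subset_insert v A), Finset.insert_subset hvV hAV,
    Finset.card_insert_of_notMem hvA, hvK⟩

theorem stmt_4_general {ι : Type*} [Fintype ι] {h : ℕ} (hh : h - 1 ≤ V.card)
    (hV : V.card < Fintype.card ι * h)
    (hK1 : ∀ A ∈ V.powersetCard (h - 1), ∃ v ∈ V \ A, insert v A ∉ K) (c : α → ι) :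
    ∃ e ∈ complEdges V h K, ∃ i : ι, ∀ v ∈ e, c v ≠ i := by
  classical
  obtain ⟨i, -, hi⟩ : ∃ i ∈ Finset.univ, (V.filter (c · = i)).card < h :=
    Finset.exists_card_fiber_lt_of_card_lt_mul hV
  obtain ⟨B, hiB, hBV, hB, hBK⟩ := exists_superset_card_eq_succ_notMem hh hK1
    (Finset.filter_subset (c · = i) V) (Nat.le_sub_one_of_lt hi)
  have hBh : B.card = h := hB.trans (Nat.sub_add_cancel (Nat.one_le_of_lt hi))
  refine ⟨V \ B, sdiff_mem_complEdges hBV hBh hBK, i, fun v hv hvi => ?_⟩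
  obtain ⟨hvV, hvB⟩ := Finset.mem_sdiff.1 hv
  exact hvB (hiB (Finset.mem_filter.2 ⟨hvV, hvi⟩))

end

theorem stmt_4 {α : Type*} [DecidableEq α] (h : ℕ) (hh : 2 ≤ h)
    (V : Finset α) (hV : V.card = 3 * h - 1)
    (K : Finset (Finset α)) (hKsub : K ⊆ V.powersetCard h)
    (hK1 : ∀ A ∈ V.powersetCard (h - 1), ∃ v ∈ V \ A, insert v A ∉ K) :
    ∀ c : α → Fin 3, ∃ e ∈ complEdges V h K, ∃ i : Fin 3, ∀ v ∈ e, c v ≠ i :=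
  stmt_4_general (by omega) (by rw [Fintype.card_fin]; omega) hK1
end

section
/- Let h ≥ 2, let V be a set of size 3h−1, and let K be a family of h-element subsets of V satisfying (K2) and (K3). Let H be the hypergraph on V whose edges are the sets V \ B where B ranges over the h-element subsets of V not in K. Then for every X ⊆ V there is a red–blue coloring of X such that no trace edge e ∩ X (e an edge of H) with |e ∩ X| ≥ h is monochromatic; consequently every h-heavy restricted subhypergraph of H is 2-colorable. -/
/-!
Color `X` by a red class `R ⊆ X`. A trace edge is `X \ B` with `B ∉ K` an `h`-set, and if it avoids
a set `T ⊆ X`, then `T ⊆ B`. This gives three cases.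

* `|X| ≤ 2h - 2`: halve `X`, so that both color classes have fewer than `h` vertices.
* `|X| = 2h - 1`: let `R` be the `(h-1)`-set `U` that (K3) provides for an `h`-set `Y ⊇ V \ X`,
  which exists since `|V| ≤ 3h - 1`. It is too small to contain a heavy edge, and a heavy edge
  `X \ B` avoiding it has `B = U ∪ {y}` with `y ∉ X`, which (K3) puts into `K`.
* `|X| ≥ 2h`: (K2) provides disjoint `h`-sets `R, S ∈ K` inside `X`. An edge avoiding `R` forces
  `B = R`, and an edge inside `R` avoids `S` and forces `B = S`.
-/

section HeavyTraceColoring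

variable {α : Type*}

/-- The edge `e` receives both colors under `c`, i.e. it is not monochromatic (`true` is red). -/
def IsBichromatic (c : α → Bool) (e : Finset α) : Prop :=
  (∃ v ∈ e, c v = true) ∧ (∃ v ∈ e, c v = false)

variable [DecidableEq α]

/-- `c` properly 2-colors the traces on `X` of size at least `h` of the edges in `E`. Colors
outside `X` are irrelevant, so `c` is total. -/
def IsHeavyTraceColoring (E : Finset (Finset α)) (h : ℕ) (X : Finset α) (c : α → Bool) : Prop :=
  ∀ e ∈ E, h ≤ (e ∩ X).card → IsBichromatic c (e ∩ X)

/-- The 2-coloring whose red class is `R`. -/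
def redOn (R : Finset α) : α → Bool := fun v => decide (v ∈ R)

variable {h : ℕ} {V X R S U e : Finset α} {K : Finset (Finset α)}

theorem isBichromatic_redOn_iff : IsBichromatic (redOn R) e ↔ ¬ Disjoint e R ∧ ¬ e ⊆ R := by
  simp only [IsBichromatic, redOn, decide_eq_true_eq, decide_eq_false_iff_not,
    Finset.not_disjoint_iff, Finset.not_subset]

theorem isHeavyTraceColoring_complEdges_iff {c : α → Bool} (hX : X ⊆ V) :
    IsHeavyTraceColoring (complEdges V h K) h X c ↔
      ∀ B ⊆ V, B.card = h → B ∉ K → h ≤ (X \ B).card → IsBichromatic c (X \ B) := by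
  have trace_eq (B : Finset α) : V \ B ∩ X = X \ B := by
    rw [Finset.sdiff_inter_right_comm, Finset.inter_eq_right.mpr hX]
  simp only [IsHeavyTraceColoring, complEdges, Finset.forall_mem_image, Finset.mem_sdiff,
    Finset.mem_powersetCard, trace_eq, and_imp]

theorem isHeavyTraceColoring_redOn_of_card_lt {E : Finset (Finset α)}
    (hR : R.card < h) (hXR : (X \ R).card < h) : IsHeavyTraceColoring E h X (redOn R) := by
  refine fun e _ he => isBichromatic_redOn_iff.mpr ⟨fun hdisj => ?_, fun hsub => ?_⟩
  · have : e ∩ X ⊆ X \ R := Finset.subset_sdiff.mpr ⟨Finset.inter_subset_right, hdisj⟩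
    exact (he.trans (Finset.card_le_card this)).not_gt hXR
  · exact (he.trans (Finset.card_le_card hsub)).not_gt hR

theorem subset_of_disjoint_sdiff {B : Finset α} (hRX : R ⊆ X) (hdisj : Disjoint (X \ B) R) :
    R ⊆ B :=
  (Finset.subset_sdiff.mpr ⟨hRX, hdisj.symm⟩).trans sdiff_sdiff_le

theorem isHeavyTraceColoring_redOn_of_forall_insert_mem (hX : X ⊆ V) (hXcard : X.card < 2 * h)
    (hUX : U ⊆ X) (hUcard : U.card + 1 = h) (hUK : ∀ y ∈ V \ X, insert y U ∈ K) :
    IsHeavyTraceColoring (complEdges V h K) h X (redOn U) := by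
  refine (isHeavyTraceColoring_complEdges_iff hX).mpr fun B hBV hBcard hBK hheavy =>
    isBichromatic_redOn_iff.mpr ⟨fun hdisj => hBK ?_, fun hsub => ?_⟩
  · obtain ⟨y, -, rfl⟩ := Finset.exists_eq_insert_iff.mpr
      ⟨subset_of_disjoint_sdiff hUX hdisj, hUcard.trans hBcard.symm⟩
    have hyX : y ∉ X := fun hyX => by
      have := Finset.card_sdiff_of_subset (Finset.insert_subset hyX hUX)
      omega
    exact hUK y (Finset.mem_sdiff.mpr ⟨hBV (Finset.mem_insert_self y U), hyX⟩)
  · have := Finset.card_le_card hsub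
    omega

theorem isHeavyTraceColoring_redOn_of_disjoint_mem (hX : X ⊆ V) (hRX : R ⊆ X) (hSX : S ⊆ X)
    (hRS : Disjoint R S) (hRcard : R.card = h) (hScard : S.card = h) (hRK : R ∈ K) (hSK : S ∈ K) :
    IsHeavyTraceColoring (complEdges V h K) h X (redOn R) := by
  refine (isHeavyTraceColoring_complEdges_iff hX).mpr fun B _ hBcard hBK _ => ?_
  have meets {T : Finset α} (hTX : T ⊆ X) (hTcard : T.card = h) (hTK : T ∈ K) :
      ¬ Disjoint (X \ B) T := fun hdisj =>
    hBK (Finset.eq_of_subset_of_card_le (subset_of_disjoint_sdiff hTX hdisj)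
      (hBcard.trans hTcard.symm).le ▸ hTK)
  exact isBichromatic_redOn_iff.mpr
    ⟨meets hRX hRcard hRK, fun hsub => meets hSX hScard hSK (hRS.mono_left hsub)⟩

theorem exists_forall_insert_mem_of_card (hV : V.card < 3 * h)
    (hK3 : ∀ Y ∈ V.powersetCard h, ∃ U ⊆ V \ Y, U.card = h - 1 ∧ ∀ y ∈ Y, insert y U ∈ K)
    (hX : X ⊆ V) (hXcard : X.card + 1 = 2 * h) :
    ∃ U ⊆ X, U.card + 1 = h ∧ ∀ y ∈ V \ X, insert y U ∈ K := by
  have hcompl := Finset.card_sdiff_of_subset hX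
  have hle := Finset.card_le_card hX
  obtain ⟨Y, hXY, hYV, hYcard⟩ : ∃ Y, V \ X ⊆ Y ∧ Y ⊆ V ∧ Y.card = h :=
    Finset.exists_subsuperset_card_eq Finset.sdiff_subset (by omega) (by omega)
  obtain ⟨U, hUY, hUcard, hUK⟩ := hK3 Y (Finset.mem_powersetCard.mpr ⟨hYV, hYcard⟩)
  exact ⟨U, hUY.trans (sdiff_le_comm.mp hXY), by omega, fun y hy => hUK y (hXY hy)⟩

theorem exists_disjoint_mem_of_two_mul_le_card
    (hK2 : ∀ Z ∈ V.powersetCard (2 * h), ∃ R ⊆ Z, R.card = h ∧ R ∈ K ∧ Z \ R ∈ K)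
    (hX : X ⊆ V) (hXcard : 2 * h ≤ X.card) :
    ∃ R ⊆ X, ∃ S ⊆ X, Disjoint R S ∧ R.card = h ∧ S.card = h ∧ R ∈ K ∧ S ∈ K := by
  obtain ⟨Z, hZX, hZcard⟩ := Finset.exists_subset_card_eq hXcard
  obtain ⟨R, hRZ, hRcard, hRK, hSK⟩ :=
    hK2 Z (Finset.mem_powersetCard.mpr ⟨hZX.trans hX, hZcard⟩)
  have hScard := Finset.card_sdiff_of_subset hRZ
  exact ⟨R, hRZ.trans hZX, Z \ R, Finset.sdiff_subset.trans hZX, Finset.disjoint_sdiff, hRcard,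
    by omega, hRK, hSK⟩

theorem exists_isHeavyTraceColoring_complEdges (hV : V.card < 3 * h)
    (hK2 : ∀ Z ∈ V.powersetCard (2 * h), ∃ R ⊆ Z, R.card = h ∧ R ∈ K ∧ Z \ R ∈ K)
    (hK3 : ∀ Y ∈ V.powersetCard h, ∃ U ⊆ V \ Y, U.card = h - 1 ∧ ∀ y ∈ Y, insert y U ∈ K)
    (hX : X ⊆ V) : ∃ c, IsHeavyTraceColoring (complEdges V h K) h X c := by
  obtain hsmall | hmid | hlarge : X.card + 1 < 2 * h ∨ X.card + 1 = 2 * h ∨ 2 * h ≤ X.card := by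
    omega
  · obtain ⟨R, hRX, hRcard⟩ := Finset.exists_subset_card_eq (Nat.div_le_self X.card 2)
    have hXR := Finset.card_sdiff_of_subset hRX
    exact ⟨redOn R, isHeavyTraceColoring_redOn_of_card_lt (by omega) (by omega)⟩
  · obtain ⟨U, hUX, hUcard, hUK⟩ := exists_forall_insert_mem_of_card hV hK3 hX hmid
    exact ⟨redOn U,
      isHeavyTraceColoring_redOn_of_forall_insert_mem hX (by omega) hUX hUcard hUK⟩
  · obtain ⟨R, hRX, S, hSX, hRS, hRcard, hScard, hRK, hSK⟩ :=
      exists_disjoint_mem_of_two_mul_le_card hK2 hX hlarge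
    exact ⟨redOn R,
      isHeavyTraceColoring_redOn_of_disjoint_mem hX hRX hSX hRS hRcard hScard hRK hSK⟩

theorem stmt_5_general (hV : V.card < 3 * h)
    (hK2 : ∀ X ∈ V.powersetCard (2 * h), ∃ R ⊆ X, R.card = h ∧ R ∈ K ∧ X \ R ∈ K)
    (hK3 : ∀ Y ∈ V.powersetCard h, ∃ U ⊆ V \ Y, U.card = h - 1 ∧ ∀ y ∈ Y, insert y U ∈ K) :
    (∀ X ⊆ V, ∃ c, IsHeavyTraceColoring (complEdges V h K) h X c) ∧
    (∀ X ⊆ V, ∀ F : Finset (Finset α),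
      (∀ f ∈ F, (∃ e ∈ complEdges V h K, f = e ∩ X) ∧ h ≤ f.card) →
      ∃ c, ∀ f ∈ F, IsBichromatic c f) := by
  have coloring (X) (hX : X ⊆ V) := exists_isHeavyTraceColoring_complEdges hV hK2 hK3 hX
  refine ⟨coloring, fun X hX F hF => (coloring X hX).imp fun c hc f hf => ?_⟩
  obtain ⟨⟨e, he, rfl⟩, hheavy⟩ := hF f hf
  exact hc e he hheavy

end HeavyTraceColoring

theorem stmt_5 {α : Type*} [DecidableEq α] (h : ℕ) (hh : 2 ≤ h)
    (V : Finset α) (hV : V.card = 3 * h - 1)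
    (K : Finset (Finset α)) (hKsub : K ⊆ V.powersetCard h)
    (hK2 : ∀ X ∈ V.powersetCard (2 * h),
      ∃ R ⊆ X, R.card = h ∧ R ∈ K ∧ X \ R ∈ K)
    (hK3 : ∀ Y ∈ V.powersetCard h,
      ∃ U ⊆ V \ Y, U.card = h - 1 ∧ ∀ y ∈ Y, insert y U ∈ K) :
    -- for every `X ⊆ V` there is a red-blue coloring of `X` such that no
    -- trace edge `e ∩ X` of size at least `h` is monochromatic
    (∀ X ⊆ V, ∃ c : α → Bool, ∀ e ∈ complEdges V h K, h ≤ (e ∩ X).card →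
      (∃ v ∈ e ∩ X, c v = true) ∧ (∃ v ∈ e ∩ X, c v = false)) ∧
    -- consequently, every `h`-heavy restricted subhypergraph of `H` is 2-colorable
    (∀ X ⊆ V, ∀ F : Finset (Finset α),
      (∀ f ∈ F, (∃ e ∈ complEdges V h K, f = e ∩ X) ∧ h ≤ f.card) →
      ∃ c : α → Bool, ∀ f ∈ F, (∃ v ∈ f, c v = true) ∧ (∃ v ∈ f, c v = false)) :=
  stmt_5_general (by omega) hK2 hK3
end

section
/- Let h ≥ 2, let V be a set of size 3h−1, let K be a family of h-element subsets of V, and let H be the hypergraph on V whose edges are the sets V \ B where B ranges over the h-element subsets of V not in K. Let X ⊆ V with |X| = 2h−1 and set Y = V \ X. Suppose U ⊆ X is an (h−1)-element set such that U ∪ {y} ∈ K for every y ∈ Y. Then the coloring of X in which U is blue and X \ U is red has no monochromatic trace edge of size at least h, i.e., there is no edge e of H with e ∩ X ⊆ U and |e ∩ X| ≥ h, and no edge e of H with e ∩ X ⊆ X \ U and |e ∩ X| ≥ h. -/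
/-!
No blue trace edge can have `h` elements, because `U` has only `h - 1`. Since `X \ U` has just `h`
elements, a red trace edge `(V \ B) ∩ X = X \ B` of size at least `h` is all of `X \ U`, so `B`
meets `X` exactly in `U`. As `B` has one element more than `U`, it is `U ∪ {y}` with `y ∉ X`, and
such sets belong to `K`, whereas `B` does not.
-/

section

variable {α : Type*} [DecidableEq α] {V X U B e : Finset α} {K : Finset (Finset α)} {h : ℕ}

theorem mem_complEdges :
    e ∈ complEdges V h K ↔ ∃ B, B ⊆ V ∧ B.card = h ∧ B ∉ K ∧ V \ B = e := by
  simp only [complEdges, Finset.mem_image, Finset.mem_sdiff, Finset.mem_powersetCard, and_assoc]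

theorem sdiff_inter_eq_sdiff_of_subset (hX : X ⊆ V) : (V \ B) ∩ X = X \ B := by
  rw [Finset.inter_comm, ← Finset.inter_sdiff_assoc, Finset.inter_eq_left.mpr hX]

theorem inter_eq_of_sdiff_eq_sdiff (hU : U ⊆ X) (hBU : X \ B = X \ U) : X ∩ B = U := by
  rw [← Finset.sdiff_sdiff_self_left, hBU, Finset.sdiff_sdiff_eq_self hU]

theorem exists_insert_eq_of_inter_eq (hXB : X ∩ B = U) (hcard : U.card + 1 = B.card) :
    ∃ y ∉ X, insert y U = B := by
  have hUB : U ⊆ B := hXB ▸ Finset.inter_subset_right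
  obtain ⟨y, hyU, hy⟩ := Finset.exists_eq_insert_iff.mpr ⟨hUB, hcard⟩
  have hyB : y ∈ B := hy ▸ Finset.mem_insert_self y U
  exact ⟨y, fun hyX => hyU (hXB ▸ Finset.mem_inter.mpr ⟨hyX, hyB⟩), hy⟩

theorem card_inter_lt_of_inter_subset_sdiff (hX : X ⊆ V) (hU : U ⊆ X) (hUcard : U.card + 1 = h)
    (hXU : (X \ U).card ≤ h) (hstar : ∀ y ∈ V \ X, insert y U ∈ K)
    (he : e ∈ complEdges V h K) (hred : e ∩ X ⊆ X \ U) : (e ∩ X).card < h := by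
  obtain ⟨B, hBV, hBcard, hBK, rfl⟩ := mem_complEdges.mp he
  rw [sdiff_inter_eq_sdiff_of_subset hX] at hred ⊢
  by_contra! hlarge
  have htrace : X \ B = X \ U := Finset.eq_of_subset_of_card_le hred (hXU.trans hlarge)
  obtain ⟨y, hyX, rfl⟩ :=
    exists_insert_eq_of_inter_eq (inter_eq_of_sdiff_eq_sdiff hU htrace) (hUcard.trans hBcard.symm)
  have hyV : y ∈ V := hBV (Finset.mem_insert_self y U)
  exact hBK (hstar y (Finset.mem_sdiff.mpr ⟨hyV, hyX⟩))

theorem stmt_6_general (hX : X ⊆ V) (hU : U ⊆ X) (hUcard : U.card + 1 = h)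
    (hXU : (X \ U).card ≤ h) (hstar : ∀ y ∈ V \ X, insert y U ∈ K) :
    (¬ ∃ e ∈ complEdges V h K, e ∩ X ⊆ U ∧ h ≤ (e ∩ X).card) ∧
    (¬ ∃ e ∈ complEdges V h K, e ∩ X ⊆ X \ U ∧ h ≤ (e ∩ X).card) := by
  constructor
  · rintro ⟨e, -, hblue, hlarge⟩
    have := Finset.card_le_card hblue
    omega
  · rintro ⟨e, he, hred, hlarge⟩
    exact hlarge.not_gt
      (card_inter_lt_of_inter_subset_sdiff hX hU hUcard hXU hstar he hred)

end

theorem stmt_6 {α : Type*} [DecidableEq α] (h : ℕ) (hh : 2 ≤ h)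
    (V : Finset α) (hV : V.card = 3 * h - 1)
    (K : Finset (Finset α)) (hKsub : K ⊆ V.powersetCard h)
    (X : Finset α) (hX : X ⊆ V) (hXcard : X.card = 2 * h - 1)
    (U : Finset α) (hU : U ⊆ X) (hUcard : U.card = h - 1)
    (hstar : ∀ y ∈ V \ X, insert y U ∈ K) :
    (¬ ∃ e ∈ complEdges V h K, e ∩ X ⊆ U ∧ h ≤ (e ∩ X).card) ∧
    (¬ ∃ e ∈ complEdges V h K, e ∩ X ⊆ X \ U ∧ h ≤ (e ∩ X).card) := by
  have hXU : (X \ U).card ≤ h := by rw [Finset.card_sdiff_of_subset hU]; omega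
  exact stmt_6_general hX hU (by omega) hXU hstar
end

section
/- For every integer h ≥ 9 there exists, on a vertex set V of size 3h−1, a family K of h-element subsets of V satisfying (K1), (K2) and (K3). -/
/-- `K` is a family of `h`-element subsets of `V` satisfying conditions
(K1), (K2) and (K3). -/
def SatisfiesK {α : Type*} [DecidableEq α]
    (V : Finset α) (h : ℕ) (K : Finset (Finset α)) : Prop :=
  K ⊆ V.powersetCard h ∧
  -- (K1)
  (∀ A ∈ V.powersetCard (h - 1), ∃ v ∈ V \ A, insert v A ∉ K) ∧
  -- (K2)
  (∀ X ∈ V.powersetCard (2 * h), ∃ R ⊆ X, R.card = h ∧ R ∈ K ∧ X \ R ∈ K) ∧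
  -- (K3)
  (∀ Y ∈ V.powersetCard h, ∃ U ⊆ V \ Y, U.card = h - 1 ∧ ∀ y ∈ Y, insert y U ∈ K)

/-!
The family `K` is random: every `h`-set is put into `K` independently with probability `p`, chosen
so that the expected number of violations of (K1), (K2) and (K3) is less than one.

A violation of (K1) at `A` is a star of `2h` sets contained in `K`. A violation of (K2) at `X`
says that `K` contains none of the `choose (2h-1) h` disjoint pairs `{R, X \ R}`, and a violation
of (K3) at `Y` says that `K` contains none of the `choose (2h-1) (h-1)` disjoint stars
`{U ∪ {y} | y ∈ Y}`. With `N = choose (3h-1) (h-1)`, `M = choose (2h-1) (h-1)` and `q = p ^ h`, the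
expected number of violations is therefore at most `N q² + 3 N (1 - q) ^ M`. For `q² = 4 / (5 N)`
the first term is `4/5` and the second is less than `1/5`, because `q M ≥ 2h - 1` and
`15 N < exp (2h - 1)` as soon as `h ≥ 9`.
-/

open Finset MeasureTheory ProbabilityTheory
open scoped unitInterval

section Measure

variable {Ω κ : Type*} [MeasurableSpace Ω] {μ : Measure Ω}

theorem measureReal_biInter_compl_of_iIndepSet {f : κ → Set Ω} (hf : ∀ i, MeasurableSet (f i))
    (h : iIndepSet f μ) (s : Finset κ) :
    μ.real (⋂ i ∈ s, (f i)ᶜ) = ∏ i ∈ s, (1 - μ.real (f i)) := by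
  have := h.isProbabilityMeasure
  have hcompl : ∀ i ∈ s, MeasurableSet[MeasurableSpace.generateFrom {f i}] (f i)ᶜ := fun i _ ↦
    (MeasurableSpace.measurableSet_generateFrom (Set.mem_singleton _)).compl
  rw [measureReal_def, ((iIndepSet_iff_iIndep f μ).1 h).meas_biInter hcompl, ENNReal.toReal_prod]
  exact prod_congr rfl fun i _ ↦ probReal_compl_eq_one_sub (hf i)

theorem measureReal_biUnion_finset_le_card_mul {S : Finset κ} {E : κ → Set Ω} {c : ℝ}
    (hE : ∀ i ∈ S, μ.real (E i) ≤ c) : μ.real (⋃ i ∈ S, E i) ≤ #S * c :=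
  (measureReal_biUnion_finset_le S E).trans <| by simpa using sum_le_card_nsmul S _ c hE

end Measure

section RandomSet

variable {ι κ : Type*} {u : Set ι}

theorem measurableSet_setOf_coe_subset (B : Finset ι) :
    MeasurableSet {K : Set ι | (B : Set ι) ⊆ K} := by
  have : {K : Set ι | (B : Set ι) ⊆ K} = ⋂ b ∈ B, {K | b ∈ K} := by ext; simp [Set.subset_def]
  rw [this]
  exact B.measurableSet_biInter fun b _ ↦ measurableSet_setOfPred.2 (measurable_set_mem b)

theorem setBernoulli_real_setOf_coe_subset (p : I) {B : Finset ι} (hB : (B : Set ι) ⊆ u) :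
    setBer(u, p).real {K | (B : Set ι) ⊆ K} = (p : ℝ) ^ #B := by
  have hcyl : (fun P : ι → Prop ↦ {i | P i}) ⁻¹' {K | (B : Set ι) ⊆ K} =
      Set.pi B fun _ ↦ {True} := by
    ext; simp [Set.subset_def]
  rw [measureReal_def, setBernoulli_apply', hcyl, Measure.infinitePi_pi _ (by simp),
    ENNReal.toReal_prod, prod_eq_pow_card]
  intro b hb
  simp [hB hb]

theorem iIndepSet_setOf_coe_subset (p : I) {B : κ → Finset ι} (hB : ∀ i, (B i : Set ι) ⊆ u)
    (hd : Pairwise fun i j ↦ Disjoint (B i) (B j)) :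
    iIndepSet (fun i ↦ {K | (B i : Set ι) ⊆ K}) setBer(u, p) := by
  classical
  rw [iIndepSet_iff_meas_biInter fun i ↦ measurableSet_setOf_coe_subset (B i)]
  intro s
  have hUnion : ⋂ i ∈ s, {K | (B i : Set ι) ⊆ K} = {K | (s.biUnion B : Set ι) ⊆ K} := by
    ext; simp
  rw [hUnion, ← ENNReal.toReal_eq_toReal_iff' (measure_ne_top _ _)
    (ENNReal.prod_ne_top fun _ _ ↦ measure_ne_top _ _), ENNReal.toReal_prod]
  change setBer(u, p).real _ = ∏ i ∈ s, setBer(u, p).real _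
  rw [setBernoulli_real_setOf_coe_subset p (by simpa using fun i _ ↦ hB i),
    card_biUnion fun i _ j _ hij ↦ hd hij, ← prod_pow_eq_pow_sum]
  exact prod_congr rfl fun i _ ↦ (setBernoulli_real_setOf_coe_subset p (hB i)).symm

theorem setBernoulli_real_forall_not_coe_subset (p : I) {J : Finset κ} {B : κ → Finset ι}
    (hB : ∀ i ∈ J, (B i : Set ι) ⊆ u) (hd : (J : Set κ).PairwiseDisjoint B) :
    setBer(u, p).real {K | ∀ i ∈ J, ¬ (B i : Set ι) ⊆ K} = ∏ i ∈ J, (1 - (p : ℝ) ^ #(B i)) := by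
  have hindep := iIndepSet_setOf_coe_subset (B := fun i : J ↦ B i) p (fun i ↦ hB i i.2)
    fun i j hij ↦ hd i.2 j.2 (Subtype.coe_ne_coe.2 hij)
  have hInter : {K | ∀ i ∈ J, ¬ (B i : Set ι) ⊆ K} =
      ⋂ i ∈ J.attach, {K | (B i : Set ι) ⊆ K}ᶜ := by
    ext; simp
  rw [hInter, measureReal_biInter_compl_of_iIndepSet
    (fun i : J ↦ measurableSet_setOf_coe_subset (B i)) hindep, ← prod_attach J]
  exact prod_congr rfl fun i _ ↦ by rw [setBernoulli_real_setOf_coe_subset p (hB i i.2)]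

end RandomSet

section Blocks

variable {α : Type*} [DecidableEq α] {A T U W X Y R S : Finset α} {x : α}

/-- The star with centre `A` and set of tips `T`: the family of all `A ∪ {t}` with `t ∈ T`. It is
meant for `T` disjoint from `A`, and encodes the families occurring in (K1) and (K3). -/
def starFamily (A T : Finset α) : Finset (Finset α) :=
  T.image fun t ↦ insert t A

theorem card_starFamily (h : Disjoint T A) : #(starFamily A T) = #T :=
  card_image_of_injOn <| (insert_inj_on A).mono fun _ ht ↦ disjoint_left.1 h ht

theorem disjoint_starFamily (hU : Disjoint Y U) (hW : Disjoint Y W) (hUW : U ≠ W) :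
    Disjoint (starFamily U Y) (starFamily W Y) := by
  have sdiff_eq {U : Finset α} (hU : Disjoint Y U) {F : Finset α} (hF : F ∈ starFamily U Y) :
      F \ Y = U := by
    obtain ⟨y, hy, rfl⟩ := mem_image.1 hF
    rw [insert_sdiff_of_mem _ hy, sdiff_eq_self_of_disjoint hU.symm]
  exact disjoint_left.2 fun F hFU hFW ↦ hUW ((sdiff_eq hU hFU).symm.trans (sdiff_eq hW hFW))

/-- The partition of `X` into `R` and its complement, as a family of two sets. It is meant for
`R ⊆ X`, and encodes the families occurring in (K2). -/
def splitPair (X R : Finset α) : Finset (Finset α) :=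
  {R, X \ R}

theorem card_splitPair (hx : x ∈ X) (hR : x ∉ R) : #(splitPair X R) = 2 :=
  card_pair fun h ↦ hR (h ▸ mem_sdiff.2 ⟨hx, hR⟩)

theorem disjoint_splitPair (hx : x ∈ X) (hR : R ⊆ X.erase x) (hS : S ⊆ X.erase x) (hRS : R ≠ S) :
    Disjoint (splitPair X R) (splitPair X S) := by
  have erase_self_sdiff {R : Finset α} (hR : R ⊆ X.erase x) {F : Finset α}
      (hF : F ∈ splitPair X R) : (if x ∈ F then X \ F else F) = R := by
    have hxR : x ∉ R := fun h ↦ notMem_erase x X (hR h)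
    obtain rfl | rfl : F = R ∨ F = X \ R := by simpa [splitPair] using hF
    · rw [if_neg hxR]
    · rw [if_pos (mem_sdiff.2 ⟨hx, hxR⟩), Finset.sdiff_sdiff_eq_self (hR.trans (erase_subset x X))]
  exact disjoint_left.2 fun F hFR hFS ↦
    hRS ((erase_self_sdiff hR hFR).symm.trans (erase_self_sdiff hS hFS))

end Blocks

section Violations

variable {α : Type*} [DecidableEq α]

/-- (K1) fails at `A` for the family `K`. Here and below `K` is a `Set` of finite sets, as
`setBernoulli` is a measure on sets. -/
def FullAt (V A : Finset α) (K : Set (Finset α)) : Prop :=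
  (starFamily A (V \ A) : Set (Finset α)) ⊆ K

/-- (K2) fails at `X` for the family `K`: no partition of `X` into two parts, the first of size `h`,
lies in `K`. -/
def UnsplitAt (h : ℕ) (X : Finset α) (K : Set (Finset α)) : Prop :=
  ∀ R ∈ X.powersetCard h, ¬ (splitPair X R : Set (Finset α)) ⊆ K

/-- (K3) fails at `Y` for the family `K`: no star with tips `Y` and centre of size `h - 1` outside
`Y` lies in `K`. -/
def StarlessAt (V : Finset α) (h : ℕ) (Y : Finset α) (K : Set (Finset α)) : Prop :=
  ∀ U ∈ (V \ Y).powersetCard (h - 1), ¬ (starFamily U Y : Set (Finset α)) ⊆ K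

variable {V A X Y : Finset α} {h : ℕ} (p : I)

theorem setBernoulli_real_fullAt (hA : A ⊆ V) :
    setBer(Set.univ, p).real {K | FullAt V A K} = (p : ℝ) ^ (#V - #A) := by
  rw [← card_sdiff_of_subset hA, ← card_starFamily sdiff_disjoint]
  exact setBernoulli_real_setOf_coe_subset p (Set.subset_univ _)

theorem setBernoulli_real_unsplitAt_le (hX : X.Nonempty) :
    setBer(Set.univ, p).real {K | UnsplitAt h X K} ≤
      (1 - (p : ℝ) ^ 2) ^ (#X - 1).choose h := by
  obtain ⟨x, hx⟩ := hX
  -- Each pair `{R, X \ R}` is counted once, through its member avoiding `x`.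
  calc setBer(Set.univ, p).real {K | UnsplitAt h X K}
      ≤ setBer(Set.univ, p).real
          {K | ∀ R ∈ (X.erase x).powersetCard h, ¬ (splitPair X R : Set (Finset α)) ⊆ K} :=
        measureReal_mono fun K hK R hR ↦ hK R (powersetCard_mono (erase_subset x X) hR)
    _ = ∏ R ∈ (X.erase x).powersetCard h, (1 - (p : ℝ) ^ #(splitPair X R)) :=
        setBernoulli_real_forall_not_coe_subset p (fun _ _ ↦ Set.subset_univ _)
          fun R hR S hS hRS ↦
            disjoint_splitPair hx (mem_powersetCard.1 hR).1 (mem_powersetCard.1 hS).1 hRS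
    _ = ∏ R ∈ (X.erase x).powersetCard h, (1 - (p : ℝ) ^ 2) :=
        prod_congr rfl fun R hR ↦ by
          rw [card_splitPair hx fun h ↦ notMem_erase x X ((mem_powersetCard.1 hR).1 h)]
    _ = (1 - (p : ℝ) ^ 2) ^ (#X - 1).choose h := by
        rw [prod_const, card_powersetCard, card_erase_of_mem hx]

theorem setBernoulli_real_starlessAt (hY : Y ⊆ V) :
    setBer(Set.univ, p).real {K | StarlessAt V h Y K} =
      (1 - (p : ℝ) ^ #Y) ^ (#V - #Y).choose (h - 1) := by
  have hdisj {U : Finset α} (hU : U ∈ (V \ Y).powersetCard (h - 1)) : Disjoint Y U :=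
    disjoint_sdiff.mono_right (mem_powersetCard.1 hU).1
  calc setBer(Set.univ, p).real {K | StarlessAt V h Y K}
      = ∏ U ∈ (V \ Y).powersetCard (h - 1), (1 - (p : ℝ) ^ #(starFamily U Y)) :=
        setBernoulli_real_forall_not_coe_subset p (fun _ _ ↦ Set.subset_univ _)
          fun U hU W hW hUW ↦ disjoint_starFamily (hdisj hU) (hdisj hW) hUW
    _ = ∏ U ∈ (V \ Y).powersetCard (h - 1), (1 - (p : ℝ) ^ #Y) :=
        prod_congr rfl fun U hU ↦ by rw [card_starFamily (hdisj hU)]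
    _ = (1 - (p : ℝ) ^ #Y) ^ (#V - #Y).choose (h - 1) := by
        rw [prod_const, card_powersetCard, card_sdiff_of_subset hY]

theorem satisfiesK_filter_mem (hh : h ≠ 0) {K : Set (Finset α)} [DecidablePred (· ∈ K)]
    (hfull : ∀ A ∈ V.powersetCard (h - 1), ¬ FullAt V A K)
    (hunsplit : ∀ X ∈ V.powersetCard (2 * h), ¬ UnsplitAt h X K)
    (hstarless : ∀ Y ∈ V.powersetCard h, ¬ StarlessAt V h Y K) :
    SatisfiesK V h {F ∈ V.powersetCard h | F ∈ K} := by
  refine ⟨filter_subset _ _, fun A hA ↦ ?_, fun X hX ↦ ?_, fun Y hY ↦ ?_⟩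
  · obtain ⟨v, hv, hvK⟩ : ∃ v ∈ V \ A, insert v A ∉ K := by
      simpa [FullAt, starFamily, Set.subset_def, and_assoc] using hfull A hA
    exact ⟨v, hv, fun hmem ↦ hvK (mem_filter.1 hmem).2⟩
  · obtain ⟨R, hR, hRK⟩ : ∃ R ∈ X.powersetCard h, R ∈ K ∧ X \ R ∈ K := by
      simpa [UnsplitAt, splitPair, Set.subset_def, and_assoc] using hunsplit X hX
    obtain ⟨hXV, hXcard⟩ := mem_powersetCard.1 hX
    obtain ⟨hRX, hRcard⟩ := mem_powersetCard.1 hR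
    have hcompl : #(X \ R) = h := by rw [card_sdiff_of_subset hRX]; lia
    exact ⟨R, hRX, hRcard,
      mem_filter.2 ⟨mem_powersetCard.2 ⟨hRX.trans hXV, hRcard⟩, hRK.1⟩,
      mem_filter.2 ⟨mem_powersetCard.2 ⟨sdiff_subset.trans hXV, hcompl⟩, hRK.2⟩⟩
  · obtain ⟨U, hU, hUK⟩ : ∃ U ∈ (V \ Y).powersetCard (h - 1), ∀ y ∈ Y, insert y U ∈ K := by
      simpa [StarlessAt, starFamily, Set.subset_def, and_assoc] using hstarless Y hY
    obtain ⟨hUV, hUcard⟩ := mem_powersetCard.1 hU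
    refine ⟨U, hUV, hUcard, fun y hy ↦ mem_filter.2 ⟨mem_powersetCard.2 ⟨?_, ?_⟩, hUK y hy⟩⟩
    · exact insert_subset ((mem_powersetCard.1 hY).1 hy) (hUV.trans sdiff_subset)
    · rw [card_insert_of_notMem fun hyU ↦ (mem_sdiff.1 (hUV hyU)).2 hy]
      lia

theorem exists_satisfiesK_of_expected_violations_lt_one (V : Finset α) (hh : h ≠ 0)
    (hp : ((#V).choose (h - 1) : ℝ) * (p : ℝ) ^ (#V - (h - 1)) +
      (#V).choose (2 * h) * (1 - (p : ℝ) ^ 2) ^ (2 * h - 1).choose h +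
      (#V).choose h * (1 - (p : ℝ) ^ h) ^ (#V - h).choose (h - 1) < 1) :
    ∃ K, SatisfiesK V h K := by
  classical
  set μ : Measure (Set (Finset α)) := setBer(Set.univ, p)
  have hfull := measureReal_biUnion_finset_le_card_mul (μ := μ) (S := V.powersetCard (h - 1))
    fun A hA ↦ (setBernoulli_real_fullAt p (mem_powersetCard.1 hA).1).le.trans_eq
      (by rw [(mem_powersetCard.1 hA).2])
  have hunsplit := measureReal_biUnion_finset_le_card_mul (μ := μ) (S := V.powersetCard (2 * h))
    fun X hX ↦ by
      have hXcard := (mem_powersetCard.1 hX).2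
      simpa only [hXcard] using
        setBernoulli_real_unsplitAt_le (h := h) p (card_pos.1 (by lia : 0 < #X))
  have hstarless := measureReal_biUnion_finset_le_card_mul (μ := μ) (S := V.powersetCard h)
    fun Y hY ↦ (setBernoulli_real_starlessAt (h := h) p (mem_powersetCard.1 hY).1).le.trans_eq
      (by rw [(mem_powersetCard.1 hY).2])
  simp only [card_powersetCard] at hfull hunsplit hstarless
  have hlt : μ.real ((⋃ A ∈ V.powersetCard (h - 1), {K | FullAt V A K}) ∪
      (⋃ X ∈ V.powersetCard (2 * h), {K | UnsplitAt h X K}) ∪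
      ⋃ Y ∈ V.powersetCard h, {K | StarlessAt V h Y K}) < 1 :=
    ((measureReal_union_le _ _).trans <| add_le_add
      ((measureReal_union_le _ _).trans (add_le_add hfull hunsplit)) hstarless).trans_lt hp
  obtain ⟨K, hK⟩ := (Set.ne_univ_iff_exists_notMem _).1 fun huniv ↦
    hlt.ne ((congrArg μ.real huniv).trans probReal_univ)
  simp only [Set.mem_union, Set.mem_iUnion, Set.mem_ofPred_eq, not_or, not_exists] at hK
  exact ⟨_, satisfiesK_filter_mem hh hK.1.1 hK.1.2 hK.2⟩

end Violations

section Estimates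

theorem choose_three_mul_add_five_le (n : ℕ) :
    (3 * n + 5).choose (n + 1) ≤ 7 * (3 * n + 2).choose n := by
  have hsucc := Nat.add_one_mul_choose_eq (3 * n + 4) n
  have hfour := Nat.choose_mul_succ_eq (3 * n + 3) n
  have hthree := Nat.choose_mul_succ_eq (3 * n + 2) n
  rw [show 3 * n + 3 + 1 - n = 2 * n + 4 by lia] at hfour
  rw [show 3 * n + 2 + 1 - n = 2 * n + 3 by lia] at hthree
  have hratio : (3 * n + 5) * (3 * n + 4) * (3 * n + 3) * (3 * n + 2).choose n =
      (3 * n + 5).choose (n + 1) * ((n + 1) * (2 * n + 4) * (2 * n + 3)) := by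
    linear_combination (2 * n + 4) * (2 * n + 3) * hsucc + (2 * n + 3) * (3 * n + 5) * hfour +
      (3 * n + 5) * (3 * n + 4) * hthree
  refine Nat.le_of_mul_le_mul_right ?_ (by positivity : 0 < (n + 1) * (2 * n + 4) * (2 * n + 3))
  calc (3 * n + 5).choose (n + 1) * ((n + 1) * (2 * n + 4) * (2 * n + 3))
      = (3 * n + 5) * (3 * n + 4) * (3 * n + 3) * (3 * n + 2).choose n := hratio.symm
    _ ≤ 7 * ((n + 1) * (2 * n + 4) * (2 * n + 3)) * (3 * n + 2).choose n := by
        gcongr ?_ * _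
        ring_nf
        lia
    _ = 7 * (3 * n + 2).choose n * ((n + 1) * (2 * n + 4) * (2 * n + 3)) := by ring

theorem nineteen_mul_choose_two_mul_add_one_le {n : ℕ} (hn : 8 ≤ n) :
    19 * (2 * n + 1).choose n ≤ 5 * (2 * n + 3).choose (n + 1) := by
  have hsucc := Nat.add_one_mul_choose_eq (2 * n + 2) n
  have htwo := Nat.choose_mul_succ_eq (2 * n + 1) n
  rw [show 2 * n + 1 + 1 - n = n + 2 by lia] at htwo
  have hratio : (2 * n + 3) * (2 * n + 2) * (2 * n + 1).choose n =
      (2 * n + 3).choose (n + 1) * ((n + 1) * (n + 2)) := by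
    linear_combination (n + 2) * hsucc + (2 * n + 3) * htwo
  refine Nat.le_of_mul_le_mul_right ?_ (by positivity : 0 < (n + 1) * (n + 2))
  calc 19 * (2 * n + 1).choose n * ((n + 1) * (n + 2))
      = 19 * ((n + 1) * (n + 2)) * (2 * n + 1).choose n := by ring
    _ ≤ 5 * ((2 * n + 3) * (2 * n + 2)) * (2 * n + 1).choose n := by
        gcongr ?_ * _
        nlinarith
    _ = 5 * (2 * n + 3).choose (n + 1) * ((n + 1) * (n + 2)) := by
        rw [mul_assoc 5, hratio, mul_assoc 5]

theorem choose_three_mul_add_two_succ (n : ℕ) :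
    (3 * n + 2).choose (n + 1) = 2 * (3 * n + 2).choose n := by
  have h := Nat.choose_succ_right_eq (3 * n + 2) n
  rw [show 3 * n + 2 - n = 2 * (n + 1) by lia, ← mul_assoc, mul_comm _ 2] at h
  exact Nat.eq_of_mul_eq_mul_right n.succ_pos h

theorem fifteen_mul_choose_lt_exp {n : ℕ} (hn : 8 ≤ n) :
    15 * ((3 * n + 2).choose n : ℝ) < Real.exp (2 * n + 1) := by
  induction n, hn using Nat.le_induction with
  | base =>
    have hchoose : (3 * 8 + 2).choose 8 = 1562275 := by decide +kernel
    calc 15 * ((3 * 8 + 2).choose 8 : ℝ) < 2.7182818283 ^ 17 := by rw [hchoose]; norm_num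
      _ < Real.exp 1 ^ 17 := by gcongr; exact Real.exp_one_gt_d9
      _ = Real.exp (2 * (8 : ℕ) + 1) := by rw [← Real.exp_nat_mul]; norm_num
  | succ n _ ih =>
    have hexp : 7 ≤ Real.exp 2 := by
      calc (7 : ℝ) ≤ 2.7182818283 ^ 2 := by norm_num
        _ ≤ Real.exp 1 ^ 2 := by gcongr; exact Real.exp_one_gt_d9.le
        _ = Real.exp 2 := by rw [← Real.exp_nat_mul]; norm_num
    have hstep : ((3 * n + 5).choose (n + 1) : ℝ) ≤ 7 * (3 * n + 2).choose n :=
      mod_cast choose_three_mul_add_five_le n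
    calc 15 * ((3 * (n + 1) + 2).choose (n + 1) : ℝ)
        ≤ 7 * (15 * (3 * n + 2).choose n) := by
          rw [show 3 * (n + 1) + 2 = 3 * n + 5 by ring]; linarith
      _ ≤ Real.exp 2 * (15 * (3 * n + 2).choose n) := by gcongr
      _ < Real.exp 2 * Real.exp (2 * n + 1) := by gcongr
      _ = Real.exp (2 * (n + 1 : ℕ) + 1) := by rw [← Real.exp_add]; push_cast; ring_nf

theorem five_mul_sq_mul_choose_le {n : ℕ} (hn : 8 ≤ n) :
    5 * (2 * n + 1) ^ 2 * (3 * n + 2).choose n ≤ 4 * (2 * n + 1).choose n ^ 2 := by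
  induction n, hn using Nat.le_induction with
  | base => decide +kernel
  | succ n hn ih =>
    have hsq : (2 * n + 3) ^ 2 ≤ 2 * (2 * n + 1) ^ 2 := by nlinarith
    have hM := Nat.pow_le_pow_left (nineteen_mul_choose_two_mul_add_one_le hn) 2
    have hN := choose_three_mul_add_five_le n
    rw [show 2 * (n + 1) + 1 = 2 * n + 3 by ring, show 3 * (n + 1) + 2 = 3 * n + 5 by ring]
    calc 5 * (2 * n + 3) ^ 2 * (3 * n + 5).choose (n + 1)
        ≤ 5 * (2 * (2 * n + 1) ^ 2) * (7 * (3 * n + 2).choose n) := by gcongr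
      _ = 14 * (5 * (2 * n + 1) ^ 2 * (3 * n + 2).choose n) := by ring
      _ ≤ 14 * (4 * (2 * n + 1).choose n ^ 2) := by gcongr
      _ ≤ 4 * (2 * n + 3).choose (n + 1) ^ 2 := by lia

theorem exists_mul_sq_add_mul_one_sub_pow_lt_one {n : ℕ} (hn : 8 ≤ n) :
    ∃ q : I, ((3 * n + 2).choose n : ℝ) * (q : ℝ) ^ 2 +
      3 * (3 * n + 2).choose n * (1 - (q : ℝ)) ^ (2 * n + 1).choose n < 1 := by
  have hexp := fifteen_mul_choose_lt_exp hn
  have hsq : 5 * (2 * n + 1 : ℝ) ^ 2 * (3 * n + 2).choose n ≤ 4 * (2 * n + 1).choose n ^ 2 :=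
    mod_cast five_mul_sq_mul_choose_le hn
  have hN : (1 : ℝ) ≤ (3 * n + 2).choose n := mod_cast Nat.choose_pos (by lia)
  set N : ℝ := ((3 * n + 2).choose n : ℝ)
  set M := (2 * n + 1).choose n
  set q := √(4 / (5 * N))
  have hqsq : q ^ 2 = 4 / (5 * N) := Real.sq_sqrt (by positivity)
  have hq1 : q ≤ 1 := Real.sqrt_le_one.2 <| (div_le_one (by positivity)).2 (by linarith)
  have hqM : 2 * n + 1 ≤ q * M := by
    refine le_of_sq_le_sq ?_ (by positivity)
    rw [mul_pow, hqsq, div_mul_eq_mul_div, le_div_iff₀ (by positivity)]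
    linarith
  have htail : 15 * N * (1 - q) ^ M < 1 :=
    calc 15 * N * (1 - q) ^ M ≤ 15 * N * Real.exp (-q) ^ M := by
          have := sub_nonneg.2 hq1
          gcongr
          exact Real.one_sub_le_exp_neg q
      _ = 15 * N * Real.exp (-(q * M)) := by rw [← Real.exp_nat_mul]; ring_nf
      _ ≤ 15 * N * Real.exp (-(2 * n + 1)) := by gcongr
      _ < Real.exp (2 * n + 1) * Real.exp (-(2 * n + 1)) := by gcongr
      _ = 1 := by rw [← Real.exp_add, add_neg_cancel, Real.exp_zero]
  refine ⟨⟨q, Real.sqrt_nonneg _, hq1⟩, ?_⟩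
  have hmain : N * q ^ 2 = 4 / 5 := by rw [hqsq]; field_simp
  change N * q ^ 2 + 3 * N * (1 - q) ^ M < 1
  linarith

theorem exists_unitInterval_pow_eq (q : I) {h : ℕ} (hh : h ≠ 0) : ∃ p : I, p ^ h = q :=
  ⟨⟨(q : ℝ) ^ (h : ℝ)⁻¹, Real.rpow_nonneg q.2.1 _, Real.rpow_le_one q.2.1 q.2.2 (by positivity)⟩,
    Subtype.ext (Real.rpow_inv_natCast_pow q.2.1 hh)⟩

theorem exists_expected_violations_lt_one {n : ℕ} (hn : 8 ≤ n) :
    ∃ p : I, ((3 * n + 2).choose n : ℝ) * ((p : ℝ) ^ (n + 1)) ^ 2 +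
      (3 * n + 2).choose n * (1 - (p : ℝ) ^ 2) ^ (2 * n + 1).choose n +
      2 * (3 * n + 2).choose n * (1 - (p : ℝ) ^ (n + 1)) ^ (2 * n + 1).choose n < 1 := by
  obtain ⟨q, hq⟩ := exists_mul_sq_add_mul_one_sub_pow_lt_one hn
  obtain ⟨p, rfl⟩ := exists_unitInterval_pow_eq q n.add_one_ne_zero
  have hpow : (p : ℝ) ^ (n + 1) ≤ (p : ℝ) ^ 2 := pow_le_pow_of_le_one p.2.1 p.2.2 (by lia)
  have hsq : (p : ℝ) ^ 2 ≤ 1 := pow_le_one₀ p.2.1 p.2.2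
  have hpair : ((3 * n + 2).choose n : ℝ) * (1 - (p : ℝ) ^ 2) ^ (2 * n + 1).choose n ≤
      (3 * n + 2).choose n * (1 - (p : ℝ) ^ (n + 1)) ^ (2 * n + 1).choose n := by
    gcongr
  refine ⟨p, ?_⟩
  push_cast at hq
  linarith

end Estimates

theorem stmt_9_general {α : Type*} [DecidableEq α] {h : ℕ} (hh : 9 ≤ h) (V : Finset α)
    (hV : #V = 3 * h - 1) : ∃ K, SatisfiesK V h K := by
  obtain ⟨n, rfl⟩ : ∃ n, h = n + 1 := Nat.exists_eq_succ_of_ne_zero (by lia)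
  obtain ⟨p, hp⟩ := exists_expected_violations_lt_one (n := n) (by lia)
  refine exists_satisfiesK_of_expected_violations_lt_one p V n.add_one_ne_zero ?_
  rw [hV, show 3 * (n + 1) - 1 = 3 * n + 2 by lia, show 2 * (n + 1) - 1 = 2 * n + 1 by lia,
    show 3 * n + 2 - (n + 1) = 2 * n + 1 by lia, Nat.add_sub_cancel,
    show 3 * n + 2 - n = (n + 1) * 2 by lia, pow_mul, Nat.choose_symm_half,
    Nat.choose_symm_of_eq_add (show 3 * n + 2 = 2 * (n + 1) + n by ring),
    choose_three_mul_add_two_succ]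
  exact_mod_cast hp

theorem stmt_9 (h : ℕ) (hh : 9 ≤ h) :
    ∃ K : Finset (Finset (Fin (3 * h - 1))),
      SatisfiesK (Finset.univ : Finset (Fin (3 * h - 1))) h K := by
  exact stmt_9_general hh univ (card_fin _)
end

section
/- For every integer h with 4 ≤ h ≤ 8 there exists, on a vertex set V of size 3h−1, a family K of h-element subsets of V satisfying (K1), (K2) and (K3). -/
/-!
Let `σ` be an involution of the `3h - 1` points with exactly `h - 3` fixed points, so that it has
`h + 1` two-element orbits, called pairs. Fix a fixed point `o`, a set `L` with exactly one point
in each orbit, and a point `z ∉ L`. Let `K` consist of the `h`-sets that avoid `o` and contain at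
most one pair, and of the `h`-sets that contain `o`, avoid `z` and contain at least one pair.

For sets not meeting `o`, (K2) and (K3) hold by separating the two points of every pair. Otherwise
they both come down to a set `C` of `2h - 1` points avoiding `o`. Only `h` points lie outside `C`
and there are `2h - 2` orbits, so at least `h - 2` orbits, two pairs among them, lie inside `C`.
Take the points of `L` in `h - 2` of these orbits, meeting all but at most one of the pairs inside
`C`, and complete a single pair: the resulting `U` contains exactly one pair, `C \ U` at most one,
and no point outside `C` completes a second pair with `U`. For (K1), an `(h - 1)`-set avoiding `o`
has at least three moved points, so one new point can be chosen to create a second pair as soon as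
there is a first one; if there is none, adding `o` does not create one. To an `(h - 1)`-set
containing `o`, add `z`.
-/

open Finset Function

lemma exists_subset_card_eq_card_sdiff_le_one {α : Type*} [DecidableEq α] {P Q : Finset α}
    (hPQ : P ⊆ Q) (w : α) {n : ℕ} (htwo : 2 ≤ #P) (hle : #P ≤ n + 1) (hn : n ≤ #Q) :
    ∃ R ⊆ Q, #R = n ∧ (∃ a ∈ P, a ∈ R ∧ a ≠ w) ∧ #(P \ R) ≤ 1 := by
  obtain ⟨b, hb, hw⟩ : ∃ b ∈ P, w ∉ P.erase b := by
    by_cases hw : w ∈ P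
    · exact ⟨w, hw, notMem_erase w P⟩
    · obtain ⟨b, hb⟩ := card_pos.1 (show 0 < #P by omega)
      exact ⟨b, hb, fun h => hw (mem_of_mem_erase h)⟩
  have hcard : #(P.erase b) = #P - 1 := card_erase_of_mem hb
  obtain ⟨R, hPR, hRQ, hR⟩ :=
    exists_subsuperset_card_eq (n := n) ((erase_subset b P).trans hPQ) (by omega) hn
  obtain ⟨a, ha⟩ := card_pos.1 (show 0 < #(P.erase b) by omega)
  refine ⟨R, hRQ, hR, ⟨a, mem_of_mem_erase ha, hPR ha, ne_of_mem_of_not_mem ha hw⟩, ?_⟩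
  have hsub : P \ R ⊆ {b} := by
    intro x hx
    have := @hPR x
    grind
  simpa using card_le_card hsub

section Pairing

variable {α : Type*} {σ : α → α} {C L S T : Finset α} {o x y z : α}

/-- `L` contains exactly one point of every orbit of the involution `σ`; in particular it contains
every fixed point. -/
def IsPairTransversal (σ : α → α) (L : Finset α) : Prop :=
  ∀ x, x ∈ L ↔ σ x ∉ L ∨ σ x = x

lemma exists_isPairTransversal [Finite α] (hσ : Involutive σ) :
    ∃ L, IsPairTransversal σ L := by
  classical
  have := Fintype.ofFinite α
  let e := Fintype.equivFin α
  refine ⟨({x | e x ≤ e (σ x)} : Finset α), fun x => ?_⟩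
  have hne : σ x ≠ x → e x ≠ e (σ x) := fun h he => h (e.injective he).symm
  simp only [mem_filter_univ, hσ x, not_le]
  grind

lemma IsPairTransversal.ne_of_notMem (hL : IsPairTransversal σ L) (hx : σ x = x)
    (hz : z ∉ L) : z ≠ x :=
  fun h => hz (h ▸ (hL x).2 (.inr hx))

lemma exists_involutive_card_fixed [Fintype α] [DecidableEq α] {k : ℕ}
    (hk : 2 * k ≤ Fintype.card α) :
    ∃ σ : α → α, Involutive σ ∧ #{x | σ x = x} + 2 * k = Fintype.card α := by
  obtain ⟨g, hg⟩ := Equiv.Perm.exists_with_cycleType_iff (α := α) (m := .replicate k 2) |>.2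
    ⟨by simpa [mul_comm] using hk, fun a ha => (Multiset.eq_of_mem_replicate ha).ge⟩
  have hsq : g ^ 2 = 1 := by
    refine orderOf_dvd_iff_pow_eq_one.1 ?_
    rw [← Equiv.Perm.lcm_cycleType, hg]
    exact Multiset.lcm_dvd.2 fun a ha => (Multiset.eq_of_mem_replicate ha).dvd
  have hsupport : #g.support = 2 * k := by
    rw [← g.sum_cycleType, hg, Multiset.sum_replicate, smul_eq_mul, mul_comm]
  have hfixed : ({x | g x = x} : Finset α) = g.supportᶜ := by
    ext x; simp
  refine ⟨g, fun x => by simpa [sq] using Equiv.Perm.congr_fun hsq x, ?_⟩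
  rw [hfixed, ← hsupport, card_compl_add_card]

variable [DecidableEq α]

/-- The union of the pairs contained in `T`, where a pair is a two-element orbit `{x, σ x}` of the
involution `σ`. Thus `T` contains a pair iff this set is nonempty, and at most one pair iff it has
at most two elements. -/
def pairedPart (σ : α → α) (T : Finset α) : Finset α :=
  {x ∈ T | σ x ∈ T ∧ σ x ≠ x}

lemma mem_pairedPart : x ∈ pairedPart σ T ↔ x ∈ T ∧ σ x ∈ T ∧ σ x ≠ x :=
  mem_filter

lemma pairedPart_subset : pairedPart σ T ⊆ T :=
  filter_subset _ _

lemma pairedPart_mono (h : S ⊆ T) : pairedPart σ S ⊆ pairedPart σ T := by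
  intro x hx
  rw [mem_pairedPart] at hx ⊢
  exact ⟨h hx.1, h hx.2.1, hx.2.2⟩

lemma apply_mem_pairedPart (hσ : Involutive σ) (hx : x ∈ pairedPart σ T) :
    σ x ∈ pairedPart σ T := by
  rw [mem_pairedPart] at hx ⊢
  rw [hσ x]
  exact ⟨hx.2.1, hx.1, hx.2.2.symm⟩

lemma pairedPart_insert_subset (hσ : Involutive σ) :
    pairedPart σ (insert y T) ⊆ pairedPart σ T ∪ {y, σ y} := by
  intro x hx
  have hx_inv := hσ x
  simp only [mem_pairedPart, mem_union, mem_insert, mem_singleton] at hx ⊢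
  grind

lemma card_pairedPart_insert_le_two (hσ : Involutive σ) (hT : pairedPart σ T = ∅) :
    #(pairedPart σ (insert y T)) ≤ 2 := by
  have hsub := pairedPart_insert_subset (y := y) (T := T) hσ
  rw [hT, empty_union] at hsub
  exact (card_le_card hsub).trans card_le_two

lemma pairedPart_insert_of_notMem (hσ : Involutive σ) (hy : σ y ∉ T) :
    pairedPart σ (insert y T) = pairedPart σ T := by
  refine (pairedPart_mono (subset_insert y T)).antisymm' fun x hx => ?_
  have hx_inv := hσ x
  simp only [mem_pairedPart, mem_insert] at hx ⊢
  grind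

namespace IsPairTransversal

lemma pairedPart_eq_empty (hL : IsPairTransversal σ L) (hT : T ⊆ L) : pairedPart σ T = ∅ := by
  refine eq_empty_of_forall_notMem fun x hx => ?_
  obtain ⟨hxT, hσx, hne⟩ := mem_pairedPart.1 hx
  exact ((hL x).1 (hT hxT)).elim (· (hT hσx)) hne

lemma card_pairedPart_sdiff (hσ : Involutive σ) (hL : IsPairTransversal σ L) :
    #(pairedPart σ T \ L) = #(pairedPart σ T ∩ L) := by
  refine card_nbij' σ σ ?_ ?_ (fun x _ => hσ x) (fun x _ => hσ x)
  all_goals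
    intro x hx
    have hσx := apply_mem_pairedPart (T := T) (x := x) hσ
    have hLx := hL x
    simp only [coe_sdiff, coe_inter, Set.mem_sdiff, Set.mem_inter_iff, mem_coe] at hx ⊢
    grind [mem_pairedPart]

lemma two_mul_card_pairedPart_inter (hσ : Involutive σ) (hL : IsPairTransversal σ L) :
    2 * #(pairedPart σ T ∩ L) = #(pairedPart σ T) := by
  have := hL.card_pairedPart_sdiff (T := T) hσ
  have := card_sdiff_add_card_inter (pairedPart σ T) L
  omega

lemma two_mul_card [Fintype α] (hσ : Involutive σ) (hL : IsPairTransversal σ L) :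
    2 * #L = Fintype.card α + #{x | σ x = x} := by
  have hmoved : pairedPart σ univ = ({x | ¬σ x = x} : Finset α) := by
    ext x; simp [mem_pairedPart]
  have hfixed : L \ pairedPart σ univ = ({x | σ x = x} : Finset α) := by
    ext x
    have := hL x
    simp only [hmoved, mem_sdiff, mem_filter_univ]
    tauto
  have hhalf := hL.two_mul_card_pairedPart_inter (T := univ) hσ
  have hsplit := card_sdiff_add_card_inter L (pairedPart σ univ)
  have htotal := card_filter_add_card_filter_not (s := (univ : Finset α)) (fun x => σ x = x)
  rw [hfixed, inter_comm] at hsplit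
  rw [hmoved] at hhalf hsplit
  rw [card_univ] at htotal
  omega

lemma exists_halves_pairedPart_eq_empty (hσ : Involutive σ) (hL : IsPairTransversal σ L) {k : ℕ}
    (hS : #S = 2 * k) :
    ∃ R ⊆ S, #R = k ∧ pairedPart σ R = ∅ ∧ pairedPart σ (S \ R) = ∅ := by
  have hlower : pairedPart σ S ∩ L ⊆ S \ (pairedPart σ S \ L) := by
    intro x hx
    have := pairedPart_subset (mem_inter.1 hx).1
    grind
  have hhalf := hL.two_mul_card_pairedPart_inter (T := S) hσ
  have hle := card_le_card (pairedPart_subset (σ := σ) (T := S))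
  have hupper : #(S \ (pairedPart σ S \ L)) = 2 * k - #(pairedPart σ S ∩ L) := by
    rw [card_sdiff_of_subset (sdiff_subset.trans pairedPart_subset),
      hL.card_pairedPart_sdiff hσ, hS]
  obtain ⟨R, hLR, hRS, hR⟩ := exists_subsuperset_card_eq (n := k) hlower (by omega) (by omega)
  have hsep : ∀ x ∈ pairedPart σ S, x ∈ R ↔ x ∈ L := by
    intro x hx
    have := @hLR x
    have := @hRS x
    grind
  have hnot : ∀ T ⊆ S, (∀ x ∈ T, x ∈ R) ∨ (∀ x ∈ T, x ∉ R) → pairedPart σ T = ∅ := by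
    refine fun T hTS hT => eq_empty_of_forall_notMem fun x hx => ?_
    have hxS := pairedPart_mono hTS hx
    have := hsep x hxS
    have := hsep (σ x) (apply_mem_pairedPart hσ hxS)
    have := hL x
    grind [mem_pairedPart]
  have hRS' : R ⊆ S := hRS.trans sdiff_subset
  exact ⟨R, hRS', hR, hnot R hRS' (.inl fun _ => id),
    hnot _ sdiff_subset (.inr fun _ hx => (mem_sdiff.1 hx).2)⟩

lemma card_le_card_orbits_inside_add [Fintype α] (hσ : Involutive σ)
    (hL : IsPairTransversal σ L) (C : Finset α) : #L ≤ #{x ∈ L | x ∈ C ∧ σ x ∈ C} + #Cᶜ := by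
  have hcover : L ⊆ {x ∈ L | x ∈ C ∧ σ x ∈ C} ∪ (Cᶜ ∩ L ∪ (Cᶜ \ L).image σ) := by
    intro x hx
    have hLx := hL x
    have hx_inv := hσ x
    simp only [mem_union, mem_filter, mem_inter, mem_image, mem_sdiff, mem_compl]
    by_cases hxC : x ∈ C
    · by_cases hσx : σ x ∈ C
      · exact .inl ⟨hx, hxC, hσx⟩
      · exact .inr (.inr ⟨σ x, by grind, hx_inv⟩)
    · exact .inr (.inl ⟨hxC, hx⟩)
  have himage : #((Cᶜ \ L).image σ) ≤ #(Cᶜ \ L) := card_image_le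
  have hsplit := card_sdiff_add_card_inter Cᶜ L
  have := card_le_card hcover
  have := card_union_le {x ∈ L | x ∈ C ∧ σ x ∈ C} (Cᶜ ∩ L ∪ (Cᶜ \ L).image σ)
  have := card_union_le (Cᶜ ∩ L) ((Cᶜ \ L).image σ)
  omega

lemma card_pairedPart_sdiff_le_two (hσ : Involutive σ) (hL : IsPairTransversal σ L)
    (h : #((pairedPart σ C ∩ L) \ S) ≤ 1) : #(pairedPart σ (C \ S)) ≤ 2 := by
  have hsub : pairedPart σ (C \ S) ∩ L ⊆ (pairedPart σ C ∩ L) \ S := by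
    intro x hx
    obtain ⟨hxP, hxL⟩ := mem_inter.1 hx
    have hxS := (mem_sdiff.1 (pairedPart_subset hxP)).2
    exact mem_sdiff.2 ⟨mem_inter.2 ⟨pairedPart_mono sdiff_subset hxP, hxL⟩, hxS⟩
  rw [← hL.two_mul_card_pairedPart_inter hσ]
  exact Nat.mul_le_mul_left 2 ((card_le_card hsub).trans h)

lemma exists_single_pair (hσ : Involutive σ) (hL : IsPairTransversal σ L) (hz : z ∉ L) {n : ℕ}
    (htwo : 2 ≤ #(pairedPart σ C ∩ L)) (hle : #(pairedPart σ C ∩ L) ≤ n + 1)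
    (hn : n ≤ #{x ∈ L | x ∈ C ∧ σ x ∈ C}) :
    ∃ U ⊆ C, #U = n + 1 ∧ z ∉ U ∧ (pairedPart σ U).Nonempty ∧ #(pairedPart σ U) ≤ 2 ∧
      (∀ x ∈ U, σ x ∈ C) ∧ #(pairedPart σ (C \ U)) ≤ 2 := by
  have hinside : pairedPart σ C ∩ L ⊆ {x ∈ L | x ∈ C ∧ σ x ∈ C} := by
    intro x hx
    grind [mem_pairedPart]
  obtain ⟨R, hR, hRn, ⟨a, haP, haR, haz⟩, hmissed⟩ :=
    exists_subset_card_eq_card_sdiff_le_one hinside (σ z) htwo hle hn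
  have hRL : R ⊆ L := hR.trans (filter_subset _ _)
  obtain ⟨-, hσaC, hσa⟩ := mem_pairedPart.1 (mem_inter.1 haP).1
  have hσaR : σ a ∉ R := fun h => ((hL a).1 (hRL haR)).elim (· (hRL h)) hσa
  refine ⟨insert (σ a) R, ?_, ?_, ?_, ⟨a, ?_⟩, ?_, ?_, ?_⟩
  · exact insert_subset hσaC fun x hx => (mem_filter.1 (hR hx)).2.1
  · rw [card_insert_of_notMem hσaR, hRn]
  · rw [mem_insert, not_or]
    exact ⟨fun h => haz (by rw [h, hσ a]), fun h => hz (hRL h)⟩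
  · exact mem_pairedPart.2 ⟨mem_insert_of_mem haR, mem_insert_self _ _, hσa⟩
  · exact card_pairedPart_insert_le_two hσ (hL.pairedPart_eq_empty hRL)
  · refine forall_mem_insert _ _ _ |>.2 ⟨?_, fun x hx => (mem_filter.1 (hR hx)).2.2⟩
    rw [hσ a]
    exact pairedPart_subset (mem_inter.1 haP).1
  · refine hL.card_pairedPart_sdiff_le_two hσ ?_
    exact (card_le_card (sdiff_subset_sdiff Subset.rfl (subset_insert _ _))).trans hmissed

end IsPairTransversal

lemma exists_second_pair (hσ : Involutive σ) (ho : σ o = o)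
    (hmoved : #{x ∈ T | σ x = x} + 2 < #T) (hfree : ∃ v ∉ T, v ≠ o)
    (hT : (pairedPart σ T).Nonempty) :
    ∃ v ∉ T, v ≠ o ∧ 2 < #(pairedPart σ (insert v T)) := by
  obtain ⟨a, ha⟩ := hT
  obtain ⟨x, hxT, hx⟩ : ∃ x ∈ T, x ∉ {x ∈ T | σ x = x} ∪ {a, σ a} := by
    refine exists_mem_notMem_of_card_lt_card ((card_union_le _ _).trans_lt ?_)
    exact (Nat.add_le_add_left card_le_two _).trans_lt hmoved
  obtain ⟨hσx, hxa⟩ : σ x ≠ x ∧ x ∉ ({a, σ a} : Finset α) := by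
    simpa only [mem_union, not_or, mem_filter, hxT, true_and] using hx
  obtain ⟨v, hvT, hvo, hv⟩ : ∃ v ∉ T, v ≠ o ∧ σ x ∈ insert v T := by
    by_cases hσxT : σ x ∈ T
    · obtain ⟨v, hvT, hvo⟩ := hfree
      exact ⟨v, hvT, hvo, mem_insert_of_mem hσxT⟩
    · have hσxo : σ x ≠ o := fun h => hσx (by rw [h, ← hσ x, h, ho])
      exact ⟨σ x, hσxT, hσxo, mem_insert_self _ _⟩
  have hsub : insert x {a, σ a} ⊆ pairedPart σ (insert v T) := by
    have hmono := pairedPart_mono (σ := σ) (subset_insert v T)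
    refine insert_subset (mem_pairedPart.2 ⟨mem_insert_of_mem hxT, hv, hσx⟩) ?_
    exact insert_subset (hmono ha) (singleton_subset_iff.2 (hmono (apply_mem_pairedPart hσ ha)))
  refine ⟨v, hvT, hvo, lt_of_lt_of_le ?_ (card_le_card hsub)⟩
  rw [card_insert_of_notMem hxa, card_pair (mem_pairedPart.1 ha).2.2.symm]
  exact Nat.lt_succ_self 2

end Pairing

section PairingFamily

variable {α : Type*} [Fintype α] [DecidableEq α] {σ : α → α} {A C L T X Y : Finset α}
  {o z : α} {h : ℕ}

/-- The family `K`: the `h`-sets that avoid `o` and contain at most one pair of `σ`, together with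
those that contain `o`, avoid `z` and contain at least one pair. -/
def pairingFamily (σ : α → α) (o z : α) (h : ℕ) : Finset (Finset α) :=
  {T ∈ univ.powersetCard h |
    if o ∈ T then z ∉ T ∧ (pairedPart σ T).Nonempty else #(pairedPart σ T) ≤ 2}

lemma mem_pairingFamily_of_mem (ho : o ∈ T) :
    T ∈ pairingFamily σ o z h ↔ #T = h ∧ z ∉ T ∧ (pairedPart σ T).Nonempty := by
  simp [pairingFamily, ho]

lemma mem_pairingFamily_of_notMem (ho : o ∉ T) :
    T ∈ pairingFamily σ o z h ↔ #T = h ∧ #(pairedPart σ T) ≤ 2 := by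
  simp [pairingFamily, ho]

lemma card_fixed_add_one_le (ho : σ o = o) (hoA : o ∉ A) :
    #{x ∈ A | σ x = x} + 1 ≤ #{x | σ x = x} := by
  rw [← card_insert_of_notMem (a := o) (by simp [hoA])]
  refine card_le_card fun x hx => ?_
  grind

lemma exists_insert_notMem_pairingFamily_of_mem (hoA : o ∈ A)
    (hfree : ∃ v, v ∉ A) : ∃ v ∉ A, insert v A ∉ pairingFamily σ o z h := by
  obtain ⟨v, hvA, hz⟩ : ∃ v ∉ A, z ∈ insert v A := by
    by_cases hzA : z ∈ A
    · obtain ⟨v, hvA⟩ := hfree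
      exact ⟨v, hvA, mem_insert_of_mem hzA⟩
    · exact ⟨z, hzA, mem_insert_self z A⟩
  refine ⟨v, hvA, fun hK => ?_⟩
  exact ((mem_pairingFamily_of_mem (mem_insert_of_mem hoA)).1 hK).2.1 hz

lemma exists_insert_notMem_pairingFamily_of_notMem (hσ : Involutive σ) (ho : σ o = o)
    (hoA : o ∉ A) (hmoved : #{x ∈ A | σ x = x} + 2 < #A) (hfree : ∃ v ∉ A, v ≠ o) :
    ∃ v ∉ A, insert v A ∉ pairingFamily σ o z h := by
  obtain hA | hA := (pairedPart σ A).eq_empty_or_nonempty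
  · refine ⟨o, hoA, fun hK => ?_⟩
    have hpair := ((mem_pairingFamily_of_mem (mem_insert_self o A)).1 hK).2.2
    rw [pairedPart_insert_of_notMem hσ (by rwa [ho]), hA] at hpair
    exact not_nonempty_empty hpair
  · obtain ⟨v, hvA, hvo, hv⟩ := exists_second_pair hσ ho hmoved hfree hA
    have hov : o ∉ insert v A := by simp [hvo.symm, hoA]
    exact ⟨v, hvA, fun hK => hv.not_ge ((mem_pairingFamily_of_notMem hov).1 hK).2⟩

lemma exists_insert_notMem_pairingFamily (hσ : Involutive σ) (ho : σ o = o)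
    (hfix : #{x | σ x = x} + 3 = h) (hcard : Fintype.card α = 3 * h - 1) (hA : #A = h - 1) :
    ∃ v ∉ A, insert v A ∉ pairingFamily σ o z h := by
  obtain ⟨v, -, hv⟩ : ∃ v ∈ univ, v ∉ insert o A := by
    refine exists_mem_notMem_of_card_lt_card ((card_insert_le o A).trans_lt ?_)
    rw [card_univ]
    omega
  by_cases hoA : o ∈ A
  · exact exists_insert_notMem_pairingFamily_of_mem hoA ⟨v, by grind⟩
  · have hfixA := card_fixed_add_one_le ho hoA
    exact exists_insert_notMem_pairingFamily_of_notMem hσ ho hoA (by omega)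
      ⟨v, by grind, by grind⟩

lemma exists_single_pair_of_card (hσ : Involutive σ) (hL : IsPairTransversal σ L)
    (ho : σ o = o) (hz : z ∉ L) (hfix : #{x | σ x = x} + 3 = h)
    (hcard : Fintype.card α = 3 * h - 1) (hoC : o ∉ C) (hC : #C = 2 * h - 1) :
    ∃ U ⊆ C, #U = h - 1 ∧ z ∉ U ∧ (pairedPart σ U).Nonempty ∧ #(pairedPart σ U) ≤ 2 ∧
      (∀ x ∈ U, σ x ∈ C) ∧ #(pairedPart σ (C \ U)) ≤ 2 := by
  have hfixC := card_fixed_add_one_le ho hoC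
  have hinside : h - 2 ≤ #{x ∈ L | x ∈ C ∧ σ x ∈ C} := by
    have := hL.two_mul_card hσ
    have := hL.card_le_card_orbits_inside_add hσ C
    have := card_compl C
    omega
  have htwo : 2 ≤ #(pairedPart σ C ∩ L) := by
    have hsub : {x ∈ L | x ∈ C ∧ σ x ∈ C} ⊆ pairedPart σ C ∩ L ∪ {x ∈ C | σ x = x} := by
      intro x hx
      grind [mem_pairedPart]
    have := (card_le_card hsub).trans (card_union_le _ _)
    omega
  have hle : #(pairedPart σ C ∩ L) ≤ h - 1 := by
    have := hL.two_mul_card_pairedPart_inter (T := C) hσ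
    have := card_le_card (pairedPart_subset (σ := σ) (T := C))
    omega
  simpa only [show h - 2 + 1 = h - 1 by omega] using
    hL.exists_single_pair hσ hz htwo (by omega) hinside

lemma exists_subset_mem_pairingFamily_sdiff_mem (hσ : Involutive σ)
    (hL : IsPairTransversal σ L) (ho : σ o = o) (hz : z ∉ L) (hfix : #{x | σ x = x} + 3 = h)
    (hcard : Fintype.card α = 3 * h - 1) (hX : #X = 2 * h) :
    ∃ R ⊆ X, R ∈ pairingFamily σ o z h ∧ X \ R ∈ pairingFamily σ o z h := by
  have hzo : z ≠ o := hL.ne_of_notMem ho hz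
  by_cases hoX : o ∈ X
  · obtain ⟨U, hUC, hU, hzU, hpair, -, -, hrest⟩ :=
      exists_single_pair_of_card (C := X.erase o) hσ hL ho hz hfix hcard (notMem_erase o X)
        (by rw [card_erase_of_mem hoX, hX])
    have hoU : o ∉ U := fun h => notMem_erase o X (hUC h)
    have hRX : insert o U ⊆ X := insert_subset hoX (hUC.trans (erase_subset o X))
    have hR : #(insert o U) = h := by rw [card_insert_of_notMem hoU]; omega
    refine ⟨insert o U, hRX, ?_, ?_⟩
    · exact (mem_pairingFamily_of_mem (mem_insert_self o U)).2
        ⟨hR, by simp [hzo, hzU], hpair.mono (pairedPart_mono (subset_insert o U))⟩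
    · refine (mem_pairingFamily_of_notMem (by simp)).2 ⟨?_, ?_⟩
      · rw [card_sdiff_of_subset hRX]; omega
      · rwa [sdiff_insert, ← erase_sdiff_comm]
  · obtain ⟨R, hRX, hR, hpair, hpair'⟩ := hL.exists_halves_pairedPart_eq_empty hσ hX
    refine ⟨R, hRX, ?_, ?_⟩
    · exact (mem_pairingFamily_of_notMem fun h => hoX (hRX h)).2 ⟨hR, by simp [hpair]⟩
    · refine (mem_pairingFamily_of_notMem fun h => hoX (sdiff_subset h)).2 ⟨?_, by simp [hpair']⟩
      rw [card_sdiff_of_subset hRX]; omega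

lemma exists_forall_insert_mem_pairingFamily (hσ : Involutive σ)
    (hL : IsPairTransversal σ L) (ho : σ o = o) (hz : z ∉ L) (hfix : #{x | σ x = x} + 3 = h)
    (hcard : Fintype.card α = 3 * h - 1) (hY : #Y = h) :
    ∃ U ⊆ Yᶜ, #U = h - 1 ∧ ∀ y ∈ Y, insert y U ∈ pairingFamily σ o z h := by
  have hzo : z ≠ o := hL.ne_of_notMem ho hz
  have hYc : #Yᶜ = 2 * h - 1 := by rw [card_compl]; omega
  have hinsert : ∀ {U}, U ⊆ Yᶜ → #U = h - 1 → ∀ y ∈ Y, #(insert y U) = h := by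
    intro U hUY hU y hy
    rw [card_insert_of_notMem fun h => mem_compl.1 (hUY h) hy]; omega
  by_cases hoY : o ∈ Y
  · obtain ⟨U, hUY, hU, hzU, hpair, hsingle, hmate, -⟩ :=
      exists_single_pair_of_card (C := Yᶜ) hσ hL ho hz hfix hcard (by simpa using hoY) hYc
    refine ⟨U, hUY, hU, fun y hy => ?_⟩
    have hσy : σ y ∉ U := fun h => mem_compl.1 (hσ y ▸ hmate _ h) hy
    have hUy := pairedPart_insert_of_notMem hσ hσy
    by_cases hyo : y = o
    · refine (mem_pairingFamily_of_mem (by simp [hyo])).2 ⟨hinsert hUY hU y hy, ?_, hUy ▸ hpair⟩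
      simp [hyo, hzo, hzU]
    · have hoU : o ∉ insert y U := by
        rw [mem_insert, not_or]
        exact ⟨Ne.symm hyo, fun h => mem_compl.1 (hUY h) hoY⟩
      exact (mem_pairingFamily_of_notMem hoU).2 ⟨hinsert hUY hU y hy, hUy ▸ hsingle⟩
  · have hC : #(Yᶜ.erase o) = 2 * (h - 1) := by
      rw [card_erase_of_mem (mem_compl.2 hoY)]; omega
    obtain ⟨U, hUC, hU, hpair, -⟩ := hL.exists_halves_pairedPart_eq_empty hσ hC
    have hUY := hUC.trans (erase_subset o _)
    refine ⟨U, hUY, hU, fun y hy => ?_⟩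
    have hoU : o ∉ insert y U := by
      rw [mem_insert, not_or]
      exact ⟨fun h => hoY (h ▸ hy), fun h => notMem_erase o _ (hUC h)⟩
    exact (mem_pairingFamily_of_notMem hoU).2
      ⟨hinsert hUY hU y hy, card_pairedPart_insert_le_two hσ hpair⟩

lemma satisfiesK_pairingFamily (hσ : Involutive σ) (hL : IsPairTransversal σ L) (ho : σ o = o)
    (hz : z ∉ L) (hfix : #{x | σ x = x} + 3 = h) (hcard : Fintype.card α = 3 * h - 1) :
    SatisfiesK univ h (pairingFamily σ o z h) := by
  refine ⟨filter_subset _ _, fun A hA => ?_, fun X hX => ?_, fun Y hY => ?_⟩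
  · simpa using exists_insert_notMem_pairingFamily (z := z) hσ ho hfix hcard
      (mem_powersetCard_univ.1 hA)
  · obtain ⟨R, hRX, hR, hR'⟩ := exists_subset_mem_pairingFamily_sdiff_mem hσ hL ho hz hfix hcard
      (mem_powersetCard_univ.1 hX)
    exact ⟨R, hRX, mem_powersetCard_univ.1 (filter_subset _ _ hR), hR, hR'⟩
  · exact exists_forall_insert_mem_pairingFamily hσ hL ho hz hfix hcard
      (mem_powersetCard_univ.1 hY)

end PairingFamily

theorem stmt_10_general {α : Type*} [Fintype α] [DecidableEq α] {h : ℕ} (hh : 4 ≤ h)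
    (hcard : Fintype.card α = 3 * h - 1) :
    ∃ K : Finset (Finset α), SatisfiesK univ h K := by
  obtain ⟨σ, hσ, hfix⟩ := exists_involutive_card_fixed (α := α) (k := h + 1) (by omega)
  obtain ⟨L, hL⟩ := exists_isPairTransversal hσ
  obtain ⟨o, ho⟩ := card_pos.1 (show 0 < #{x | σ x = x} by omega)
  obtain ⟨z, hz⟩ : Lᶜ.Nonempty := by
    have := hL.two_mul_card hσ
    rw [← card_pos, card_compl]
    omega
  exact ⟨pairingFamily σ o z h, satisfiesK_pairingFamily hσ hL (mem_filter.1 ho).2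
    (mem_compl.1 hz) (by omega) hcard⟩

theorem stmt_10 (h : ℕ) (hh1 : 4 ≤ h) (hh2 : h ≤ 8) :
    ∃ K : Finset (Finset (Fin (3 * h - 1))),
      SatisfiesK (Finset.univ : Finset (Fin (3 * h - 1))) h K :=
  stmt_10_general hh1 (Fintype.card_fin _)
end

section
/- For every integer h ≥ 31, with q = 7/20 one has Φ_h(q) = C(3h−1, h−1)·q^{2h} + C(3h−1, 2h)·(1−q²)^{C(2h,h)/2} + C(3h−1, h)·(1−q^h)^{C(2h−1,h−1)} < 1. -/
/-!
The two large exponents agree: `C(2h, h) / 2 = C(2h - 1, h - 1) =: N`. The choice of `q` balances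
two requirements. Since every binomial coefficient of `3h - 1` is at most
`2 ^ (3h - 1) = 8 ^ h / 2`, the condition `8 q ^ 2 ≤ 1` bounds the first summand by `1 / 2`. Since
`N ≥ 4 ^ h / (4h)` and `4 q ≥ 7 / 5`, the product `N q ^ h` grows exponentially and exceeds
`3h + 1`, so that `(1 - q ^ 2) ^ N ≤ (1 - q ^ h) ^ N ≤ exp (-N q ^ h) < 2 ^ (-(3h + 1))` keeps
each of the other two summands below `1 / 4`.
-/

theorem two_pow_mul_one_sub_pow_lt_one {m N : ℕ} {x : ℝ} (hm : m ≠ 0) (hx : x ≤ 1)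
    (hmN : m ≤ N * x) : 2 ^ m * (1 - x) ^ N < 1 := by
  have two_pow_lt : (2 : ℝ) ^ m < Real.exp m := by
    rw [← Real.exp_one_pow]
    exact pow_lt_pow_left₀ Real.exp_one_gt_two zero_le_two hm
  have one_sub_pow_le : (1 - x) ^ N ≤ Real.exp (-m) :=
    calc (1 - x) ^ N ≤ Real.exp (-x) ^ N :=
          pow_le_pow_left₀ (sub_nonneg.mpr hx) (Real.one_sub_le_exp_neg x) N
      _ = Real.exp (-(N * x)) := by rw [← Real.exp_nat_mul, mul_neg]
      _ ≤ Real.exp (-m) := Real.exp_le_exp.mpr (neg_le_neg hmN)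
  calc 2 ^ m * (1 - x) ^ N ≤ 2 ^ m * Real.exp (-m) := by gcongr
    _ < Real.exp m * Real.exp (-m) := by gcongr
    _ = 1 := by rw [← Real.exp_add, add_neg_cancel, Real.exp_zero]

theorem choose_mul_one_sub_pow_lt {n N : ℕ} {x : ℝ} (k : ℕ) (hx : x ≤ 1)
    (hnN : ((n + 2 : ℕ) : ℝ) ≤ N * x) : (n.choose k : ℝ) * (1 - x) ^ N < 1 / 4 := by
  have choose_le : (n.choose k : ℝ) ≤ 2 ^ n := mod_cast Nat.choose_le_two_pow n k
  calc (n.choose k : ℝ) * (1 - x) ^ N ≤ 2 ^ n * (1 - x) ^ N :=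
        mul_le_mul_of_nonneg_right choose_le (pow_nonneg (sub_nonneg.mpr hx) N)
    _ = 2 ^ (n + 2) * (1 - x) ^ N / 4 := by ring
    _ < 1 / 4 := by
      gcongr
      exact two_pow_mul_one_sub_pow_lt_one (by omega) hx hnN

theorem choose_three_mul_sub_one_mul_pow_le {h : ℕ} {q : ℝ} (hh : h ≠ 0) (k : ℕ)
    (hq : 8 * q ^ 2 ≤ 1) : ((3 * h - 1).choose k : ℝ) * q ^ (2 * h) ≤ 1 / 2 := by
  have choose_le : ((3 * h - 1).choose k : ℝ) ≤ 2 ^ (3 * h - 1) :=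
    mod_cast Nat.choose_le_two_pow (3 * h - 1) k
  have two_pow_eq : (2 : ℝ) ^ (3 * h - 1) = 8 ^ h / 2 := by
    rw [eq_div_iff two_ne_zero, pow_sub_one_mul (by omega), pow_mul]
    norm_num
  calc ((3 * h - 1).choose k : ℝ) * q ^ (2 * h) ≤ 8 ^ h / 2 * (q ^ 2) ^ h := by
        rw [pow_mul, ← two_pow_eq]
        gcongr
    _ = (8 * q ^ 2) ^ h / 2 := by rw [mul_pow]; ring
    _ ≤ 1 / 2 := by
      gcongr
      exact pow_le_one₀ (by positivity) hq

theorem centralBinom_eq_two_mul_choose_sub_one {h : ℕ} (hh : h ≠ 0) :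
    h.centralBinom = 2 * (2 * h - 1).choose (h - 1) := by
  obtain ⟨n, rfl⟩ := Nat.exists_eq_succ_of_ne_zero hh
  rw [Nat.centralBinom_eq_two_mul_choose, Nat.succ_eq_add_one, Nat.add_sub_cancel,
    show 2 * (n + 1) - 1 = 2 * n + 1 by omega, mul_add_one,
    Nat.choose_succ_succ', Nat.choose_symm_half, ← two_mul]

theorem four_pow_le_four_mul_self_mul_choose {h : ℕ} (hh : h ≠ 0) :
    4 ^ h ≤ 4 * h * (2 * h - 1).choose (h - 1) :=
  calc 4 ^ h ≤ 2 * h * h.centralBinom :=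
        Nat.four_pow_le_two_mul_self_mul_centralBinom h (Nat.pos_of_ne_zero hh)
    _ = 4 * h * (2 * h - 1).choose (h - 1) := by
      rw [centralBinom_eq_two_mul_choose_sub_one hh]
      ring

theorem le_choose_mul_pow {h : ℕ} {q a : ℝ} (hh : h ≠ 0) (hq : 0 ≤ q)
    (ha : 4 * h * a ≤ (4 * q) ^ h) : a ≤ (2 * h - 1).choose (h - 1) * q ^ h := by
  have four_pow_le : (4 : ℝ) ^ h ≤ 4 * h * (2 * h - 1).choose (h - 1) :=
    mod_cast four_pow_le_four_mul_self_mul_choose hh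
  refine le_of_mul_le_mul_left (a := (4 * h : ℝ)) ?_ (by positivity)
  calc 4 * h * a ≤ 4 ^ h * q ^ h := by rwa [← mul_pow]
    _ ≤ 4 * h * (2 * h - 1).choose (h - 1) * q ^ h := by gcongr
    _ = 4 * h * ((2 * h - 1).choose (h - 1) * q ^ h) := mul_assoc _ _ _

theorem four_mul_self_mul_three_mul_add_one_le_pow {h : ℕ} {b : ℝ} (hh : 28 ≤ h)
    (hb : 7 / 5 ≤ b) : 4 * (h : ℝ) * (3 * h + 1) ≤ b ^ h := by
  suffices 4 * (h : ℝ) * (3 * h + 1) ≤ (7 / 5) ^ h from this.trans (by gcongr)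
  induction h, hh using Nat.le_induction with
  | base => norm_num
  | succ n hn ih =>
    have hn' : (28 : ℝ) ≤ n := mod_cast hn
    calc 4 * ((n + 1 : ℕ) : ℝ) * (3 * (n + 1 : ℕ) + 1)
        ≤ 4 * n * (3 * n + 1) * (7 / 5) := by
          push_cast
          nlinarith
      _ ≤ (7 / 5) ^ n * (7 / 5) := by gcongr
      _ = (7 / 5) ^ (n + 1) := (pow_succ _ _).symm

theorem stmt_12_general {h : ℕ} {q : ℝ} (hh : 28 ≤ h) (hq : 7 / 20 ≤ q) (hq8 : 8 * q ^ 2 ≤ 1) :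
    ((3 * h - 1).choose (h - 1) : ℝ) * q ^ (2 * h) +
      ((3 * h - 1).choose (2 * h) : ℝ) * (1 - q ^ 2) ^ ((2 * h).choose h / 2) +
      ((3 * h - 1).choose h : ℝ) * (1 - q ^ h) ^ ((2 * h - 1).choose (h - 1)) < 1 := by
  have h_ne : h ≠ 0 := by omega
  have hq0 : 0 ≤ q := by linarith
  have hq1 : q ≤ 1 := by nlinarith
  have exponent_eq : (2 * h).choose h / 2 = (2 * h - 1).choose (h - 1) := by
    rw [← Nat.centralBinom_eq_two_mul_choose, centralBinom_eq_two_mul_choose_sub_one h_ne,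
      Nat.mul_div_cancel_left _ two_pos]
  have exponent_mul_ge :
      ((3 * h - 1 + 2 : ℕ) : ℝ) ≤ (2 * h - 1).choose (h - 1) * q ^ h := by
    rw [show 3 * h - 1 + 2 = 3 * h + 1 by omega]
    push_cast
    exact le_choose_mul_pow h_ne hq0
      (four_mul_self_mul_three_mul_add_one_le_pow hh (by linarith))
  have pow_le_sq : q ^ h ≤ q ^ 2 := pow_le_pow_of_le_one hq0 hq1 (by omega)
  have first_le := choose_three_mul_sub_one_mul_pow_le h_ne (h - 1) hq8
  have second_lt := choose_mul_one_sub_pow_lt (2 * h) (pow_le_one₀ hq0 hq1)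
    (exponent_mul_ge.trans (mul_le_mul_of_nonneg_left pow_le_sq (Nat.cast_nonneg _)))
  have third_lt := choose_mul_one_sub_pow_lt h (pow_le_one₀ hq0 hq1) exponent_mul_ge
  rw [exponent_eq]
  linarith

theorem stmt_12 (h : ℕ) (hh : 31 ≤ h) :
    ((3 * h - 1).choose (h - 1) : ℝ) * ((7 : ℝ) / 20) ^ (2 * h) +
      ((3 * h - 1).choose (2 * h) : ℝ) *
        (1 - ((7 : ℝ) / 20) ^ 2) ^ ((2 * h).choose h / 2) +
      ((3 * h - 1).choose h : ℝ) *
        (1 - ((7 : ℝ) / 20) ^ h) ^ ((2 * h - 1).choose (h - 1)) < 1 :=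
  stmt_12_general (by omega) le_rfl (by norm_num)
end
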